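/- arXiv:0801.4432 — 2 statements merged into one kernel-verified Lean document; each statement's English description precedes it below -/
import Mathlib

section
/- Let P ⊂ ℝⁿ be an integral polytope of dimension d with Ehrhart polynomial L_P. Then for every positive integer t, (−1)^d L_P(−t) = #(t·P° ∩ ℤⁿ), where P° is the relative interior of P (Ehrhart–Macdonald reciprocity). -/
open Pointwise

/-- Number of lattice points of a subset of `ℝⁿ`. -/
noncomputable def latticeCount {n : ℕ} (S : Set (Fin n → ℝ)) : ℕ :=
  Set.ncard {x ∈ S | ∀ i, ∃ m : ℤ, x i = m}

/-
Homogenization turns `P` into the cone over it, generated by the lattice points `(v, 1)`, and the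
dilate `t • P` into the slice at height `t`; the relative interior corresponds to the positive
combinations of the generators. A generic lifting of the generators triangulates the cone. Fix a
generic vector `q` inside the cone. Removing from each simplicial cone the facets across which `q`
points outwards makes the triangulation of the closed cone disjoint; doing the same with `-q`
removes exactly the complementary facets and tiles the open cone.

On a half-open simplicial cone with generators `b 0, …, b d` and removed facets `S`, the count at
height `t` is `∑ k, h*_k * (t - k + d).choose d`, where `h*_k` counts the lattice points of height
`k` in a half-open parallelepiped. The reflection `x ↦ ∑ i, b i - x` of the parallelepiped matches
`h*_k` for `S` with `h*_(d + 1 - k)` for `Sᶜ`, and the substitution `t ↦ -t` matches the binomial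
polynomials of `k` and `d + 1 - k` up to the sign `(-1) ^ d`.
-/

namespace EhrhartMacdonald

open Filter Finset Module Polynomial Submodule Topology

section HalfOpen

/-- The unit interval without its left endpoint if `s` holds, without its right endpoint
otherwise: the range of one coordinate on a half-open parallelepiped. -/
def halfOpenUnit (s : Prop) : Set ℝ :=
  {α | α ∈ Set.Icc 0 1 ∧ (s → α ≠ 0) ∧ (¬ s → α ≠ 1)}

/-- The ray `[0, ∞)`, without its endpoint if `s` holds: the range of one coordinate on a
half-open simplicial cone. -/
def halfOpenRay (s : Prop) : Set ℝ :=
  {α | 0 ≤ α ∧ (s → α ≠ 0)}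

variable {s : Prop} {α β : ℝ}

theorem one_sub_mem_halfOpenUnit_not (h : α ∈ halfOpenUnit s) : 1 - α ∈ halfOpenUnit (¬ s) := by
  obtain ⟨⟨h0, h1⟩, hs, hns⟩ := h
  exact ⟨⟨by linarith, by linarith⟩, fun h h' ↦ hns h (by linarith),
    fun h h' ↦ hs (not_not.1 h) (by linarith)⟩

theorem add_natCast_mem_halfOpenRay (h : α ∈ halfOpenUnit s) (n : ℕ) :
    α + n ∈ halfOpenRay s := by
  have hn : (0 : ℝ) ≤ n := n.cast_nonneg
  refine ⟨add_nonneg h.1.1 hn, fun hs h0 ↦ h.2.1 hs ?_⟩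
  linarith [h.1.1]

theorem exists_halfOpenUnit_add_natCast_eq (h : α ∈ halfOpenRay s) :
    ∃ n : ℕ, ∃ β ∈ halfOpenUnit s, β + n = α := by
  obtain ⟨h0, hs⟩ := h
  by_cases h' : s
  · have hpos : 0 < α := h0.lt_of_ne' (hs h')
    obtain ⟨n, hn⟩ := Nat.exists_eq_add_one_of_ne_zero (Nat.ceil_pos.2 hpos).ne'
    have hlt : (n : ℝ) < α := Nat.lt_ceil.1 (by lia)
    have hle : α ≤ n + 1 := by exact_mod_cast hn ▸ Nat.le_ceil α
    exact ⟨n, α - n, ⟨⟨by linarith, by linarith⟩, fun _ ↦ by linarith, absurd h'⟩, by ring⟩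
  · have hle : (⌊α⌋₊ : ℝ) ≤ α := Nat.floor_le h0
    have hlt : α < ⌊α⌋₊ + 1 := Nat.lt_floor_add_one α
    exact ⟨⌊α⌋₊, α - ⌊α⌋₊,
      ⟨⟨by linarith, by linarith⟩, fun h ↦ absurd h h', fun _ ↦ by linarith⟩, by ring⟩

theorem natCast_eq_of_halfOpenUnit_add_eq {m n : ℕ} (hα : α ∈ halfOpenUnit s)
    (hβ : β ∈ halfOpenUnit s) (h : α + m = β + n) : m = n := by
  have le_of_add_eq : ∀ {α β : ℝ} {m n : ℕ}, α ∈ halfOpenUnit s → β ∈ halfOpenUnit s →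
      α + m = β + n → m ≤ n := by
    intro α β m n hα hβ h
    by_contra! hlt
    have hmn : (n : ℝ) + 1 ≤ m := by exact_mod_cast hlt
    have hα0 : α = 0 := by linarith [hα.1.1, hβ.1.2]
    have hβ1 : β = 1 := by linarith [hα.1.1, hβ.1.2]
    exact hβ.2.2 (fun hs ↦ hα.2.1 hs hα0) hβ1
  exact (le_of_add_eq hα hβ h).antisymm (le_of_add_eq hβ hα h.symm)

theorem tendsto_add_mul_nhdsGT_zero (α β : ℝ) :
    Tendsto (fun ε ↦ α + ε * β) (𝓝[>] 0) (𝓝 α) :=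
  (Continuous.tendsto' (by fun_prop) _ _ (by simp)).mono_left nhdsWithin_le_nhds

theorem eventually_add_mul_ne_zero (α : ℝ) (hβ : β ≠ 0) :
    ∀ᶠ ε in 𝓝[>] (0 : ℝ), α + ε * β ≠ 0 := by
  rcases eq_or_ne α 0 with rfl | h
  · filter_upwards [self_mem_nhdsWithin] with ε (hε : 0 < ε)
    simpa using ⟨hε.ne', hβ⟩
  · exact (tendsto_add_mul_nhdsGT_zero α β).eventually_ne h

theorem eventually_add_mul_pos_iff (α : ℝ) (hβ : β ≠ 0) :
    ∀ᶠ ε in 𝓝[>] (0 : ℝ), (0 < α + ε * β ↔ α ∈ halfOpenRay (β < 0)) := by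
  have hlim := tendsto_add_mul_nhdsGT_zero α β
  rcases lt_trichotomy α 0 with h | rfl | h
  · filter_upwards [hlim.eventually_lt_const h] with ε hε
    exact iff_of_false hε.not_gt fun h' ↦ h.not_ge h'.1
  · filter_upwards [self_mem_nhdsWithin] with ε (hε : 0 < ε)
    simp [halfOpenRay, hε, hβ.symm.le_iff_lt]
  · filter_upwards [hlim.eventually_const_lt h] with ε hε
    exact iff_of_true hε ⟨h.le, fun _ ↦ h.ne'⟩

end HalfOpen

theorem finite_inter_lattice_of_isCompact {E : Type*} [NormedAddCommGroup E] {Λ : Submodule ℤ E}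
    [DiscreteTopology Λ] {K : Set E} (hK : IsCompact K) :
    (K ∩ Λ).Finite := by
  have hclosed : IsClosed (Λ : Set E) := Λ.toAddSubgroup.isClosed_of_discrete
  have hdiscr : IsDiscrete (Λ : Set E) := DiscreteTopology.isDiscrete
  exact (hK.inter_right hclosed).finite (hdiscr.mono Set.inter_subset_right)

section Lattice

variable {E : Type*} [AddCommGroup E] {Λ : Submodule ℤ E}

/-- The lattice `Λ × ℤ` in `E × ℝ`. -/
def prodInt (Λ : Submodule ℤ E) : Submodule ℤ (E × ℝ) :=
  Λ.prod (AddSubgroup.zmultiples (1 : ℝ)).toIntSubmodule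

theorem mem_prodInt {x : E × ℝ} : x ∈ prodInt Λ ↔ x.1 ∈ Λ ∧ ∃ m : ℤ, x.2 = m := by
  have hx : x.2 ∈ AddSubgroup.zmultiples (1 : ℝ) ↔ ∃ m : ℤ, x.2 = m := by
    simp [AddSubgroup.mem_zmultiples_iff, eq_comm]
  exact Iff.rfl.and hx

instance [TopologicalSpace E] [DiscreteTopology Λ] : DiscreteTopology (prodInt Λ) := by
  have : DiscreteTopology (AddSubgroup.zmultiples (1 : ℝ)).toIntSubmodule :=
    inferInstanceAs (DiscreteTopology (AddSubgroup.zmultiples (1 : ℝ)))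
  refine DiscreteTopology.of_continuous_injective
    (f := fun x : prodInt Λ ↦
      ((⟨x.1.1, x.2.1⟩, ⟨x.1.2, x.2.2⟩) : Λ × (AddSubgroup.zmultiples (1 : ℝ)).toIntSubmodule))
    (by fun_prop) fun x y hxy ↦ ?_
  simp only [Prod.mk.injEq, Subtype.mk.injEq] at hxy
  exact Subtype.ext (Prod.ext hxy.1 hxy.2)

variable [Module ℝ E]

/-- The lattice points of `C` at height `t`. -/
def levelPoints (Λ : Submodule ℤ E) (h : E →ₗ[ℝ] ℝ) (C : Set E) (t : ℕ) : Set E :=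
  {x ∈ C | x ∈ Λ ∧ h x = t}

theorem ncard_levelPoints_biUnion {α : Type*} {T : Set α} [Fintype T] {C : α → Set E}
    (hC : T.PairwiseDisjoint C) {h : E →ₗ[ℝ] ℝ} {t : ℕ}
    (hfin : (levelPoints Λ h (⋃ B ∈ T, C B) t).Finite) :
    (levelPoints Λ h (⋃ B ∈ T, C B) t).ncard =
      ∑ B ∈ T.toFinset, (levelPoints Λ h (C B) t).ncard := by
  have hlevel : levelPoints Λ h (⋃ B ∈ T, C B) t = ⋃ B ∈ T, levelPoints Λ h (C B) t := by
    ext x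
    simp only [levelPoints, Set.mem_ofPred_eq, Set.mem_iUnion, exists_prop]
    tauto
  rw [hlevel] at hfin ⊢
  rw [Set.Finite.ncard_biUnion T.toFinite, finsum_mem_eq_toFinset_sum]
  · exact fun B hB ↦ hfin.subset
      (Set.subset_biUnion_of_mem (u := fun B ↦ levelPoints Λ h (C B) t) hB)
  · exact hC.mono fun B ↦ Set.sep_subset _ _

end Lattice

section HilbertPolynomial

variable {F : Type*} [Field F]

theorem eval_preHilbertPoly_of_lt {d k t : ℕ} (htk : t < k) (hkt : k ≤ t + d) :
    (preHilbertPoly F d k).eval (t : F) = 0 := by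
  have hshift : (t : F) - k + 1 = -((k - 1 - t : ℕ) : F) := by
    push_cast [Nat.cast_sub (show t ≤ k - 1 by lia), Nat.cast_sub (show 1 ≤ k by lia)]
    ring
  simp only [preHilbertPoly, eval_smul, eval_comp, eval_add, eval_sub, eval_X, eval_C, eval_one,
    hshift, ascPochhammer_eval_neg_coe_nat_of_lt (show k - 1 - t < d by lia), smul_zero]

theorem neg_one_pow_mul_eval_neg_preHilbertPoly {d k : ℕ} (hk : k ≤ d + 1) (x : F) :
    (-1) ^ d * (preHilbertPoly F d k).eval (-x) = (preHilbertPoly F d (d + 1 - k)).eval x := by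
  simp only [preHilbertPoly, eval_smul, eval_comp, eval_add, eval_sub, eval_X, eval_C, eval_one,
    smul_eq_mul]
  rw [show -x - k + 1 = -(x + k - 1) by ring, ascPochhammer_eval_neg_eq_descPochhammer,
    descPochhammer_eval_eq_ascPochhammer, mul_left_comm, ← mul_assoc ((-1) ^ d), ← mul_pow,
    neg_one_mul, neg_neg, one_pow, one_mul]
  push_cast [Nat.cast_sub hk]
  ring_nf

end HilbertPolynomial

section SimplicialCone

variable {E κ : Type*} [AddCommGroup E] [Module ℝ E] (b : Basis κ ℝ E) (S : Set κ)

/-- The simplicial cone on `b` without its facets opposite to the vectors `b i`, `i ∈ S`. -/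
def halfOpenCone : Set E :=
  {x | ∀ i, b.repr x i ∈ halfOpenRay (i ∈ S)}

/-- The parallelepiped whose translates by `ℕ`-combinations of `b` tile `halfOpenCone b S`. -/
def halfOpenBox : Set E :=
  {x | ∀ i, b.repr x i ∈ halfOpenUnit (i ∈ S)}

/-- The `k`-th entry of the `h*`-vector of `halfOpenCone b S`: the numerator of its Ehrhart
series has this coefficient in degree `k`. -/
noncomputable def hStar (Λ : Submodule ℤ E) (h : E →ₗ[ℝ] ℝ) (k : ℕ) : ℕ :=
  (levelPoints Λ h (halfOpenBox b S) k).ncard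

variable {b S} {Λ : Submodule ℤ E} {h : E →ₗ[ℝ] ℝ}

section Fintype

variable [Fintype κ]

theorem sum_repr_eq_height (hb : ∀ i, h (b i) = 1) (x : E) : ∑ i, b.repr x i = h x := by
  conv_rhs => rw [← b.sum_repr x]
  simp only [map_sum, map_smul, hb, smul_eq_mul, mul_one]

theorem repr_add_sum_natCast_smul (p : E) (n : κ →₀ ℕ) (i : κ) :
    b.repr (p + ∑ j, (n j : ℝ) • b j) i = b.repr p i + n i := by
  classical
  simp [Finsupp.single_apply]

theorem injOn_add_sum_natCast_smul :
    Set.InjOn (fun z : E × (κ →₀ ℕ) ↦ z.1 + ∑ i, (z.2 i : ℝ) • b i)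
      (halfOpenBox b S ×ˢ Set.univ) := by
  rintro ⟨p, m⟩ ⟨hp, -⟩ ⟨q, n⟩ ⟨hq, -⟩ heq
  obtain rfl : m = n := by
    ext i
    refine natCast_eq_of_halfOpenUnit_add_eq (hp i) (hq i) ?_
    simpa only [repr_add_sum_natCast_smul] using congr(b.repr $heq i)
  simpa using heq

theorem exists_halfOpenBox_add_sum_eq {x : E} (hx : x ∈ halfOpenCone b S) :
    ∃ p ∈ halfOpenBox b S, ∃ n : κ →₀ ℕ, p + ∑ i, (n i : ℝ) • b i = x := by
  choose n a ha hna using fun i ↦ exists_halfOpenUnit_add_natCast_eq (hx i)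
  refine ⟨∑ i, a i • b i, fun i ↦ by rw [b.repr_sum_self]; exact ha i,
    Finsupp.equivFunOnFinite.symm n, ?_⟩
  rw [← b.sum_repr x, ← Finset.sum_add_distrib]
  exact Finset.sum_congr rfl fun i _ ↦ by simp [← hna, add_smul]

theorem sum_natCast_smul_mem (hbΛ : ∀ i, b i ∈ Λ) (n : κ →₀ ℕ) :
    ∑ i, (n i : ℝ) • b i ∈ Λ := by
  refine sum_mem fun i _ ↦ ?_
  rw [Nat.cast_smul_eq_nsmul]
  exact nsmul_mem (hbΛ i) _

open Classical in
theorem levelPoints_halfOpenCone_eq_image (hb : ∀ i, h (b i) = 1) (hbΛ : ∀ i, b i ∈ Λ)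
    (hΛ : ∀ x ∈ Λ, ∃ m : ℤ, h x = m) (t : ℕ) :
    levelPoints Λ h (halfOpenCone b S) t =
      (fun z : E × (κ →₀ ℕ) ↦ z.1 + ∑ i, (z.2 i : ℝ) • b i) ''
        ⋃ km ∈ antidiagonal t, levelPoints Λ h (halfOpenBox b S) km.1 ×ˢ
          ↑(univ.finsuppAntidiag km.2 : Finset (κ →₀ ℕ)) := by
  ext x
  simp only [Set.mem_image, Set.mem_iUnion, Prod.exists, Set.mem_prod,
    HasAntidiagonal.mem_antidiagonal, mem_coe, mem_finsuppAntidiag, exists_prop]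
  constructor
  · rintro ⟨hx, hxΛ, hxt⟩
    obtain ⟨p, hp, n, rfl⟩ := exists_halfOpenBox_add_sum_eq hx
    have hpΛ : p ∈ Λ := (Λ.add_mem_iff_left (sum_natCast_smul_mem hbΛ n)).1 hxΛ
    have hnonneg : 0 ≤ h p := by
      rw [← sum_repr_eq_height hb]
      exact Finset.sum_nonneg fun i _ ↦ (hp i).1.1
    obtain ⟨m, hm⟩ := hΛ p hpΛ
    lift m to ℕ using by exact_mod_cast hm ▸ hnonneg
    refine ⟨p, n, ⟨m, ∑ i, n i, ?_, ⟨hp, hpΛ, by exact_mod_cast hm⟩, rfl, subset_univ _⟩, rfl⟩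
    rw [map_add, hm] at hxt
    simp only [map_sum, map_smul, hb, smul_eq_mul, mul_one] at hxt
    exact_mod_cast hxt
  · rintro ⟨p, n, ⟨k, m, rfl, ⟨hp, hpΛ, hpk⟩, hn, -⟩, rfl⟩
    refine ⟨fun i ↦ ?_, Λ.add_mem hpΛ (sum_natCast_smul_mem hbΛ n), ?_⟩
    · rw [repr_add_sum_natCast_smul]
      exact add_natCast_mem_halfOpenRay (hp i) _
    · simp [hb, hpk, ← hn]

theorem mapsTo_sub_levelPoints_halfOpenBox (hb : ∀ i, h (b i) = 1) (hbΛ : ∀ i, b i ∈ Λ) {d k : ℕ}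
    (hd : finrank ℝ E = d + 1) (hk : k ≤ d + 1) :
    Set.MapsTo (∑ i, b i - ·) (levelPoints Λ h (halfOpenBox b S) k)
      (levelPoints Λ h (halfOpenBox b Sᶜ) (d + 1 - k)) := by
  rintro x ⟨hx, hxΛ, hxk⟩
  refine ⟨fun i ↦ ?_, Λ.sub_mem (sum_mem fun i _ ↦ hbΛ i) hxΛ, ?_⟩
  · have hrepr : b.repr (∑ j, b j - x) i = 1 - b.repr x i := by simp
    exact hrepr ▸ one_sub_mem_halfOpenUnit_not (hx i)
  · have hsum : h (∑ i, b i) = d + 1 := by simp [hb, ← finrank_eq_card_basis b, hd]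
    rw [map_sub, hsum, hxk]
    push_cast [Nat.cast_sub hk]
    rfl

end Fintype

variable [Finite κ]

theorem height_le_of_mem_halfOpenBox (hb : ∀ i, h (b i) = 1) {d : ℕ} (hd : finrank ℝ E = d + 1)
    {x : E} (hx : x ∈ halfOpenBox b S) : h x ≤ d + 1 := by
  cases nonempty_fintype κ
  calc h x = ∑ i, b.repr x i := (sum_repr_eq_height hb x).symm
    _ ≤ ∑ _ : κ, 1 := Finset.sum_le_sum fun i _ ↦ (hx i).1.2
    _ = d + 1 := by simp [← finrank_eq_card_basis b, hd]

theorem hStar_eq_zero (hb : ∀ i, h (b i) = 1) {d k : ℕ} (hd : finrank ℝ E = d + 1)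
    (hk : d + 1 < k) : hStar b S Λ h k = 0 := by
  cases nonempty_fintype κ
  suffices levelPoints Λ h (halfOpenBox b S) k = ∅ by rw [hStar, this, Set.ncard_empty]
  refine Set.eq_empty_iff_forall_notMem.2 ?_
  rintro x ⟨hx, -, hxk⟩
  have : (k : ℝ) ≤ d + 1 := hxk ▸ height_le_of_mem_halfOpenBox hb hd hx
  exact hk.not_ge (by exact_mod_cast this)

theorem hStar_compl (hb : ∀ i, h (b i) = 1) (hbΛ : ∀ i, b i ∈ Λ) {d k : ℕ}
    (hd : finrank ℝ E = d + 1) (hk : k ≤ d + 1) :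
    hStar b Sᶜ Λ h (d + 1 - k) = hStar b S Λ h k := by
  cases nonempty_fintype κ
  have hmaps := mapsTo_sub_levelPoints_halfOpenBox (S := S) hb hbΛ hd hk
  have hmaps' := mapsTo_sub_levelPoints_halfOpenBox (S := Sᶜ) hb hbΛ hd (Nat.sub_le (d + 1) k)
  rw [compl_compl, Nat.sub_sub_self hk] at hmaps'
  exact (Set.InvOn.bijOn ⟨fun x _ ↦ sub_sub_cancel _ x, fun x _ ↦ sub_sub_cancel _ x⟩
    hmaps hmaps').ncard_eq.symm

/-- The Ehrhart polynomial of `halfOpenCone b S`, written in terms of its `h*`-vector. -/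
noncomputable def simplicialEhrhart (b : Basis κ ℝ E) (S : Set κ) (Λ : Submodule ℤ E)
    (h : E →ₗ[ℝ] ℝ) (d : ℕ) : ℚ[X] :=
  ∑ k ∈ range (d + 2), C (hStar b S Λ h k : ℚ) * preHilbertPoly ℚ d k

theorem neg_one_pow_mul_eval_neg_simplicialEhrhart (hb : ∀ i, h (b i) = 1)
    (hbΛ : ∀ i, b i ∈ Λ) {d : ℕ} (hd : finrank ℝ E = d + 1) (x : ℚ) :
    (-1) ^ d * (simplicialEhrhart b S Λ h d).eval (-x) =
      (simplicialEhrhart b Sᶜ Λ h d).eval x := by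
  simp only [simplicialEhrhart, eval_finsetSum, eval_mul, eval_C, mul_sum]
  rw [← sum_range_reflect _ (d + 2)]
  refine Finset.sum_congr rfl fun k hk ↦ ?_
  have hk : k ≤ d + 1 := by simpa [Nat.lt_succ_iff] using hk
  have hstar := hStar_compl (S := S) hb hbΛ hd (Nat.sub_le (d + 1) k)
  have hpoly := neg_one_pow_mul_eval_neg_preHilbertPoly (Nat.sub_le (d + 1) k) x
  rw [Nat.sub_sub_self hk] at hstar hpoly
  rw [show d + 2 - 1 - k = d + 1 - k by lia, ← hstar, ← hpoly]
  ring

end SimplicialCone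

section SimplicialEhrhart

variable {E κ : Type*} [NormedAddCommGroup E] [NormedSpace ℝ E] [Finite κ] {b : Basis κ ℝ E}
  {S : Set κ} {Λ : Submodule ℤ E} [DiscreteTopology Λ] {h : E →ₗ[ℝ] ℝ}

theorem finite_levelPoints_halfOpenBox (k : ℕ) :
    (levelPoints Λ h (halfOpenBox b S) k).Finite := by
  cases nonempty_fintype κ
  have hcompact : IsCompact (b.equivFun.symm '' Set.Icc 0 1) :=
    isCompact_Icc.image (LinearMap.continuous_of_finiteDimensional b.equivFun.symm.toLinearMap)
  refine (finite_inter_lattice_of_isCompact (Λ := Λ) hcompact).subset ?_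
  rintro x ⟨hx, hΛ, -⟩
  exact ⟨⟨b.equivFun x, ⟨fun i ↦ (hx i).1.1, fun i ↦ (hx i).1.2⟩, by simp⟩, hΛ⟩

theorem ncard_levelPoints_halfOpenCone (hb : ∀ i, h (b i) = 1)
    (hbΛ : ∀ i, b i ∈ Λ) (hΛ : ∀ x ∈ Λ, ∃ m : ℤ, h x = m) {d : ℕ} (hd : finrank ℝ E = d + 1)
    (t : ℕ) :
    (levelPoints Λ h (halfOpenCone b S) t).ncard =
      ∑ km ∈ antidiagonal t, hStar b S Λ h km.1 * (km.2 + d).choose d := by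
  classical
  cases nonempty_fintype κ
  rw [levelPoints_halfOpenCone_eq_image hb hbΛ hΛ, Set.InjOn.ncard_image]
  · rw [← Finset.set_biUnion_coe, Set.Finite.ncard_biUnion (Finset.finite_toSet _)]
    · rw [finsum_mem_coe_finset]
      refine Finset.sum_congr rfl fun km _ ↦ ?_
      rw [Set.ncard_prod, Set.ncard_coe_finset, card_finsuppAntidiag_nat_eq_choose, card_univ,
        ← finrank_eq_card_basis b, hd, hStar, Nat.choose_symm_of_eq_add (a := km.2) (b := d)]
      · congr 2; lia
      · lia
    · exact fun km _ ↦ (finite_levelPoints_halfOpenBox _).prod (Finset.finite_toSet _)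
    · rintro ⟨k, m⟩ - ⟨k', m'⟩ - hne
      refine Set.disjoint_left.2 ?_
      rintro ⟨p, n⟩ ⟨⟨-, -, hk⟩, hm⟩ ⟨⟨-, -, hk'⟩, hm'⟩
      simp only [mem_coe, mem_finsuppAntidiag] at hm hm'
      refine hne (Prod.ext ?_ (hm.1.symm.trans hm'.1))
      exact_mod_cast hk.symm.trans hk'
  · refine (injOn_add_sum_natCast_smul (S := S)).mono ?_
    simp only [Set.iUnion_subset_iff]
    rintro km - ⟨p, n⟩ ⟨hp, -⟩
    exact ⟨hp.1, trivial⟩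

theorem eval_simplicialEhrhart (hb : ∀ i, h (b i) = 1)
    (hbΛ : ∀ i, b i ∈ Λ) (hΛ : ∀ x ∈ Λ, ∃ m : ℤ, h x = m) {d : ℕ} (hd : finrank ℝ E = d + 1)
    {t : ℕ} (ht : 0 < t) :
    (simplicialEhrhart b S Λ h d).eval (t : ℚ) = (levelPoints Λ h (halfOpenCone b S) t).ncard := by
  rw [ncard_levelPoints_halfOpenCone hb hbΛ hΛ hd, Nat.sum_antidiagonal_eq_sum_range_succ_mk,
    simplicialEhrhart, eval_finsetSum, Nat.cast_sum]
  refine Finset.sum_congr_of_eq_on_inter ?_ ?_ ?_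
  · intro k hkd hkt
    rw [mem_range] at hkd hkt
    rw [eval_mul, eval_preHilbertPoly_of_lt (by lia) (by lia), mul_zero]
  · intro k _ hkd
    rw [mem_range] at hkd
    simp [hStar_eq_zero hb hd (show d + 1 < k by lia)]
  · intro k _ hkt
    rw [mem_range] at hkt
    rw [eval_mul, eval_C, preHilbertPoly_eq_choose_sub_add ℚ d (by lia : k ≤ t), Nat.cast_mul]

end SimplicialEhrhart

section Subbasis

variable {E ι : Type*} [AddCommGroup E] [Module ℝ E]

/-- A subset of `ι` along which the family `v` is a basis. -/
def Subbasis (v : ι → E) : Type _ :=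
  {B : Set ι // LinearIndepOn ℝ v B ∧ span ℝ (v '' B) = ⊤}

variable {v : ι → E}

instance [Finite ι] : Finite (Subbasis v) :=
  inferInstanceAs (Finite (Subtype _))

theorem exists_subbasis_forall_mem_span (hv : span ℝ (Set.range v) = ⊤) (s : Set ι) :
    ∃ B : Subbasis v, ∀ j ∈ s, v j ∈ span ℝ (v '' (B.1 ∩ s)) := by
  obtain ⟨B₀, hB₀s, -, hspan, hB₀⟩ :=
    exists_linearIndepOn_extension (linearIndepOn_empty ℝ v) (Set.empty_subset s)
  obtain ⟨B, -, hB₀B, hrange, hB⟩ := exists_linearIndepOn_extension hB₀ (Set.subset_univ B₀)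
  refine ⟨⟨B, hB, ?_⟩, fun j hj ↦ ?_⟩
  · rw [eq_top_iff, ← hv, ← Set.image_univ]
    exact span_le.2 hrange
  · exact span_mono (Set.image_mono (Set.subset_inter hB₀B hB₀s))
      (hspan (Set.mem_image_of_mem v hj))

namespace Subbasis

variable (B : Subbasis v)

/-- The basis of the ambient space formed by the vectors of a `Subbasis`. -/
noncomputable def basis : Basis B.1 ℝ E :=
  Basis.mk B.2.1 (by rw [← Set.image_eq_range, B.2.2])

theorem basis_apply (i : B.1) : B.basis i = v i :=
  Basis.mk_apply _ _ i

/-- The coordinates of a vector in `B.basis`, extended by zero to a vector indexed by `ι`. -/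
noncomputable def coords : E →ₗ[ℝ] ι → ℝ :=
  Finsupp.lcoeFun ∘ₗ Finsupp.lmapDomain ℝ ℝ Subtype.val ∘ₗ B.basis.repr.toLinearMap

theorem coords_apply (x : E) (i : B.1) : B.coords x i = B.basis.repr x i :=
  Finsupp.mapDomain_apply Subtype.val_injective _ _

theorem coords_of_notMem (x : E) {i : ι} (hi : i ∉ B.1) : B.coords x i = 0 :=
  Finsupp.mapDomain_of_notMem_range _ _ (by simpa using hi)

theorem linearCombination_coords [Fintype ι] (x : E) :
    Fintype.linearCombination ℝ v (B.coords x) = x := by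
  have hv : v ∘ Subtype.val = B.basis := funext fun i ↦ (B.basis_apply i).symm
  calc Fintype.linearCombination ℝ v (B.coords x)
      = Finsupp.linearCombination ℝ v ((B.basis.repr x).mapDomain Subtype.val) := by
        rw [Finsupp.linearCombination_apply, Finsupp.sum_fintype _ _ (by simp)]
        rfl
    _ = x := by rw [Finsupp.linearCombination_mapDomain, hv, B.basis.linearCombination_repr]

theorem coords_nonneg {x : E} (hx : ∀ i ∈ B.1, 0 ≤ B.coords x i) : 0 ≤ B.coords x := fun i ↦ by
  by_cases hi : i ∈ B.1
  · exact hx i hi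
  · exact (B.coords_of_notMem x hi).ge

theorem coords_self [DecidableEq ι] {i : ι} (hi : i ∈ B.1) : B.coords (v i) = Pi.single i 1 := by
  have hrepr : B.basis.repr (v i) = Finsupp.single ⟨i, hi⟩ 1 := by
    rw [← B.basis_apply ⟨i, hi⟩, B.basis.repr_self]
  simp [coords, hrepr, Finsupp.mapDomain_single, Finsupp.single_eq_pi_single]

theorem coords_eq_zero_of_mem_span {s : Set ι} {x : E} (hx : x ∈ span ℝ (v '' (B.1 ∩ s))) {i : ι}
    (hi : i ∉ s) : B.coords x i = 0 := by
  classical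
  suffices span ℝ (v '' (B.1 ∩ s)) ≤ LinearMap.ker (LinearMap.proj i ∘ₗ B.coords) from this hx
  rw [span_le]
  rintro _ ⟨k, ⟨hkB, hks⟩, rfl⟩
  simp [B.coords_self hkB, Pi.single_eq_of_ne (fun h : i = k ↦ hi (h ▸ hks))]

section Circuit

variable [DecidableEq ι]

/-- The linear relation expressing `v j` in terms of `B`, with coefficient `1` at `j ∉ B`. -/
noncomputable def circuit (j : ι) : ι → ℝ :=
  Pi.single j 1 - B.coords (v j)

theorem circuit_of_mem {j : ι} (hj : j ∈ B.1) : B.circuit j = 0 := by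
  rw [circuit, B.coords_self hj, sub_self]

theorem circuit_ne_zero {j : ι} (hj : j ∉ B.1) : B.circuit j ≠ 0 := fun h ↦ by
  simpa [circuit, B.coords_of_notMem _ hj] using congrFun h j

theorem circuit_apply_of_ne {i j : ι} (hij : i ≠ j) : B.circuit j i = -B.coords (v j) i := by
  simp [circuit, hij]

theorem mem_of_circuit_neg {i j : ι} (hi : B.circuit j i < 0) : i ∈ B.1 := by
  by_contra hiB
  have hnonneg : 0 ≤ (Pi.single j 1 : ι → ℝ) i := by
    rw [Pi.single_apply]
    split_ifs <;> norm_num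
  simp only [circuit, Pi.sub_apply, B.coords_of_notMem _ hiB, sub_zero] at hi
  exact hi.not_ge hnonneg

variable [Fintype ι]

theorem linearCombination_circuit (j : ι) :
    Fintype.linearCombination ℝ v (B.circuit j) = 0 := by
  simp [circuit, B.linearCombination_coords]

theorem sum_smul_circuit (a : ι → ℝ) :
    ∑ j, a j • B.circuit j = a - B.coords (Fintype.linearCombination ℝ v a) := by
  simp_rw [circuit, smul_sub, Finset.sum_sub_distrib, Fintype.linearCombination_apply, map_sum,
    map_smul]
  congr 1
  ext i
  simp [Pi.single_apply]

end Circuit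

theorem coords_linearCombination [Fintype ι] {a : ι → ℝ} (ha : ∀ i ∉ B.1, a i = 0) :
    B.coords (Fintype.linearCombination ℝ v a) = a := by
  classical
  refine (sub_eq_zero.1 ?_).symm
  rw [← B.sum_smul_circuit]
  refine Finset.sum_eq_zero fun j _ ↦ ?_
  by_cases hj : j ∈ B.1
  · rw [B.circuit_of_mem hj, smul_zero]
  · rw [ha j hj, zero_smul]

end Subbasis

end Subbasis

section Combinations

variable {E ι : Type*} [AddCommGroup E] [Module ℝ E] [Fintype ι] {v : ι → E}

/-- The linear combinations of `v` with coefficients in `R`: for `R = [0, ∞)` the closed cone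
generated by `v`, for `R = (0, ∞)` its relative interior. -/
def combinations (R : Set ℝ) (v : ι → E) : Set E :=
  Fintype.linearCombination ℝ v '' Set.univ.pi fun _ ↦ R

theorem combinations_Ioi_subset_Ici : combinations (Set.Ioi 0) v ⊆ combinations (Set.Ici 0) v :=
  Set.image_mono (Set.pi_mono fun _ _ ↦ Set.Ioi_subset_Ici_self)

theorem smul_mem_combinations {R : Set ℝ} {c : ℝ} (hR : ∀ r ∈ R, c * r ∈ R) {x : E}
    (hx : x ∈ combinations R v) : c • x ∈ combinations R v := by
  obtain ⟨a, ha, rfl⟩ := hx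
  exact ⟨c • a, fun i _ ↦ hR _ (ha i trivial), map_smul _ _ _⟩

theorem smul_mem_combinations_Ioi {c : ℝ} (hc : 0 < c) {x : E}
    (hx : x ∈ combinations (Set.Ioi 0) v) : c • x ∈ combinations (Set.Ioi 0) v :=
  smul_mem_combinations (fun _ hr ↦ mul_pos hc hr) hx

theorem add_mem_combinations_Ioi {x y : E} (hx : x ∈ combinations (Set.Ici 0) v)
    (hy : y ∈ combinations (Set.Ioi 0) v) : x + y ∈ combinations (Set.Ioi 0) v := by
  obtain ⟨a, ha, rfl⟩ := hx
  obtain ⟨c, hc, rfl⟩ := hy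
  refine ⟨a + c, fun i hi ↦ ?_, map_add _ _ _⟩
  exact add_pos_of_nonneg_of_pos (α := ℝ) (ha i hi) (hc i hi)

theorem eventually_add_smul_mem_combinations_Ioi {x : E} (hx : x ∈ combinations (Set.Ioi 0) v)
    (c : ι → ℝ) :
    ∀ᶠ ε in 𝓝[>] (0 : ℝ), x + ε • Fintype.linearCombination ℝ v c ∈ combinations (Set.Ioi 0) v := by
  obtain ⟨a, ha, rfl⟩ := hx
  have hpos : ∀ᶠ ε in 𝓝[>] (0 : ℝ), ∀ i, 0 < a i + ε * c i := eventually_all.2 fun i ↦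
    (tendsto_add_mul_nhdsGT_zero (a i) (c i)).eventually_const_lt (ha i trivial)
  filter_upwards [hpos] with ε hε
  exact ⟨a + ε • c, fun i _ ↦ hε i, by rw [map_add, map_smul]⟩

theorem image_combinations {F : Type*} [AddCommGroup F] [Module ℝ F] (f : E →ₗ[ℝ] F)
    (R : Set ℝ) : f '' combinations R v = combinations R (f ∘ v) := by
  have hf : f ∘ Fintype.linearCombination ℝ v = Fintype.linearCombination ℝ (f ∘ v) := by
    ext a
    simp [Fintype.linearCombination_apply]
  rw [combinations, combinations, Set.image_image, ← hf]
  rfl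

theorem height_linearCombination {h : E →ₗ[ℝ] ℝ} (hv : ∀ i, h (v i) = 1) (a : ι → ℝ) :
    h (Fintype.linearCombination ℝ v a) = ∑ i, a i := by
  simp [Fintype.linearCombination_apply, hv]

theorem mem_combinations_of_coords_nonneg {B : Subbasis v} {x : E}
    (hx : ∀ i ∈ B.1, 0 ≤ B.coords x i) :
    x ∈ combinations (Set.Ici 0) v :=
  ⟨B.coords x, fun i _ ↦ B.coords_nonneg hx i, B.linearCombination_coords x⟩

end Combinations

section GenericPoint

variable {E ι : Type*} [AddCommGroup E] [Module ℝ E] {v : ι → E}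

/-- A point lying on none of the hyperplanes spanned by the facets of simplicial cones on `v`. -/
def IsGenericPoint (v : ι → E) (q : E) : Prop :=
  ∀ B : Subbasis v, ∀ i ∈ B.1, B.coords q i ≠ 0

theorem IsGenericPoint.neg {q : E} (hq : IsGenericPoint v q) : IsGenericPoint v (-q) :=
  fun B i hi ↦ by simpa using hq B i hi

namespace Subbasis

/-- The simplicial cone on `B` without the facets across which the direction `q` points outwards. -/
def tile (B : Subbasis v) (q : E) : Set E :=
  halfOpenCone B.basis {i | B.coords q i < 0}

end Subbasis

theorem tile_neg {B : Subbasis v} {q : E} (hq : IsGenericPoint v q) :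
    B.tile (-q) = halfOpenCone B.basis {i | B.coords q i < 0}ᶜ := by
  have hcompl : {i : B.1 | B.coords (-q) i < 0} = {i : B.1 | B.coords q i < 0}ᶜ := by
    ext i
    simp [(hq B i i.2).symm.le_iff_lt]
  rw [Subbasis.tile, hcompl]

theorem eventually_isGenericPoint_add_smul [Finite ι] {q : E} (hq : IsGenericPoint v q) (x : E) :
    ∀ᶠ ε in 𝓝[>] (0 : ℝ), IsGenericPoint v (x + ε • q) := by
  refine eventually_all.2 fun B ↦ eventually_all.2 fun i ↦ eventually_imp_distrib_left.2 fun hi ↦ ?_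
  filter_upwards [eventually_add_mul_ne_zero (B.coords x i) (hq B i hi)] with ε hε
  simpa using hε

theorem eventually_coords_pos_iff_mem_tile [Finite ι] {q : E} (hq : IsGenericPoint v q) (x : E) :
    ∀ᶠ ε in 𝓝[>] (0 : ℝ), ∀ B : Subbasis v,
      (∀ i ∈ B.1, 0 < B.coords (x + ε • q) i) ↔ x ∈ B.tile q := by
  have hsign : ∀ᶠ ε in 𝓝[>] (0 : ℝ), ∀ B : Subbasis v, ∀ i ∈ B.1,
      0 < B.coords x i + ε * B.coords q i ↔ B.coords x i ∈ halfOpenRay (B.coords q i < 0) :=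
    eventually_all.2 fun B ↦ eventually_all.2 fun i ↦ eventually_imp_distrib_left.2 fun hi ↦
      eventually_add_mul_pos_iff _ (hq B i hi)
  filter_upwards [hsign] with ε hε B
  have htile : x ∈ B.tile q ↔ ∀ i ∈ B.1, B.coords x i ∈ halfOpenRay (B.coords q i < 0) := by
    simp only [Subbasis.tile, halfOpenCone, ← B.coords_apply]
    exact Subtype.forall
  rw [htile]
  refine forall₂_congr fun i hi ↦ ?_
  simpa using hε B i hi

variable [Fintype ι]

theorem tile_subset_combinations (B : Subbasis v) (q : E) :
    B.tile q ⊆ combinations (Set.Ici 0) v := by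
  intro x hx
  refine mem_combinations_of_coords_nonneg (B := B) fun i hi ↦ ?_
  rw [B.coords_apply x ⟨i, hi⟩]
  exact (hx ⟨i, hi⟩).1

theorem exists_isGenericPoint : ∃ q ∈ combinations (Set.Ioi 0) v, IsGenericPoint v q := by
  classical
  obtain ⟨g, hg⟩ := Dual.exists_forall_ne_zero_of_forall_exists
    (fun p : Σ B : Subbasis v, B.1 ↦
      LinearMap.proj p.2.1 ∘ₗ p.1.coords ∘ₗ Fintype.linearCombination ℝ v)
    fun ⟨B, i, hi⟩ ↦ ⟨Pi.single i 1, by simp [B.coords_self hi]⟩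
  have hgen : IsGenericPoint v (Fintype.linearCombination ℝ v g) := fun B i hi ↦ hg ⟨B, i, hi⟩
  have hmem : Fintype.linearCombination ℝ v 1 ∈ combinations (Set.Ioi 0) v :=
    ⟨1, fun _ _ ↦ one_pos (α := ℝ), rfl⟩
  obtain ⟨ε, hεpos, hεgen⟩ := ((eventually_add_smul_mem_combinations_Ioi hmem g).and
    (eventually_isGenericPoint_add_smul hgen _)).exists
  exact ⟨_, hεpos, hεgen⟩

end GenericPoint

section Triangulation

variable {E ι : Type*} [AddCommGroup E] [Module ℝ E] {v : ι → E}

theorem isCompact_setOf_linearCombination_eq [Fintype ι] {h : E →ₗ[ℝ] ℝ} (hv : ∀ i, h (v i) = 1)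
    (y : E) :
    IsCompact {a : ι → ℝ | 0 ≤ a ∧ Fintype.linearCombination ℝ v a = y} := by
  obtain hempty | ⟨a₀, rfl⟩ := {a | Fintype.linearCombination ℝ v a = y}.eq_empty_or_nonempty
  · simp [Set.ofPred_and, hempty]
  have hker : {a | Fintype.linearCombination ℝ v a = Fintype.linearCombination ℝ v a₀} =
      (· - a₀) ⁻¹' LinearMap.ker (Fintype.linearCombination ℝ v) := by
    ext a
    simp [sub_eq_zero]
  have hclosed : IsClosed {a | Fintype.linearCombination ℝ v a =
      Fintype.linearCombination ℝ v a₀} := by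
    rw [hker]
    exact (closed_of_finiteDimensional _).preimage (continuous_sub_right a₀)
  refine isCompact_Icc.of_isClosed_subset (isClosed_Ici.inter hclosed)
    (s := Set.Icc 0 fun _ ↦ h (Fintype.linearCombination ℝ v a₀)) ?_
  rintro a ⟨ha, hay⟩
  refine ⟨ha, fun i ↦ ?_⟩
  rw [← hay, height_linearCombination hv]
  exact Finset.single_le_sum (fun j _ ↦ ha j) (mem_univ i)

theorem map_nonneg_of_isMinOn [Fintype ι] {w : Dual ℝ (ι → ℝ)} {y : E} {a r : ι → ℝ}
    (ha : 0 ≤ a) (hay : Fintype.linearCombination ℝ v a = y)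
    (hmin : IsMinOn w {a | 0 ≤ a ∧ Fintype.linearCombination ℝ v a = y} a)
    (hr : Fintype.linearCombination ℝ v r = 0) (hsupp : ∀ i, r i < 0 → a i ≠ 0) : 0 ≤ w r := by
  have hnonneg : ∀ᶠ ε in 𝓝[>] (0 : ℝ), ∀ i, 0 ≤ a i + ε * r i := by
    refine eventually_all.2 fun i ↦ ?_
    rcases lt_or_ge (r i) 0 with hi | hi
    · exact ((tendsto_add_mul_nhdsGT_zero (a i) (r i)).eventually_const_lt
        ((ha i).lt_of_ne' (hsupp i hi))).mono fun _ ↦ le_of_lt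
    · filter_upwards [self_mem_nhdsWithin] with ε hε
      exact add_nonneg (ha i) (mul_nonneg (le_of_lt hε) hi)
  obtain ⟨ε, hε, hεpos⟩ := (hnonneg.and self_mem_nhdsWithin).exists
  have hle : w a ≤ w (a + ε • r) := hmin ⟨hε, by simp [hay, hr]⟩
  rw [map_add, map_smul, le_add_iff_nonneg_right] at hle
  exact (mul_nonneg_iff_of_pos_left hεpos).1 hle

variable [DecidableEq ι]

/-- A lifting functional for which no `v j` is lifted into a hyperplane spanned by the lifts of
other elements of `v`; lifting by `w` sends `v i` to height `w (Pi.single i 1)`. -/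
def IsGenericLift (v : ι → E) (w : Dual ℝ (ι → ℝ)) : Prop :=
  ∀ B : Subbasis v, ∀ j ∉ B.1, w (B.circuit j) ≠ 0

theorem exists_isGenericLift [Finite ι] : ∃ w : Dual ℝ (ι → ℝ), IsGenericLift v w := by
  obtain ⟨w, hw⟩ := exists_dual_forall_apply_ne_zero (K := ℝ)
    (fun p : Σ B : Subbasis v, (B.1ᶜ : Set ι) ↦ p.1.circuit p.2)
    fun ⟨B, j, hj⟩ ↦ B.circuit_ne_zero hj
  exact ⟨w, fun B j hj ↦ hw ⟨B, j, hj⟩⟩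

/-- The maximal cells of the regular triangulation given by `w`: every lifted `v j` lies on or
above the hyperplane spanned by the lift of `B`. -/
def triangulation (v : ι → E) (w : Dual ℝ (ι → ℝ)) : Set (Subbasis v) :=
  {B | ∀ j, 0 ≤ w (B.circuit j)}

variable {w : Dual ℝ (ι → ℝ)} {B B' : Subbasis v}

theorem map_coords_le_of_mem_triangulation [Fintype ι] (hB : B ∈ triangulation v w)
    {a : ι → ℝ} (ha : 0 ≤ a) :
    w (B.coords (Fintype.linearCombination ℝ v a)) ≤ w a := by
  have : w (∑ j, a j • B.circuit j) ≥ 0 := by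
    simp only [map_sum, map_smul]
    exact Finset.sum_nonneg fun j _ ↦ mul_nonneg (ha j) (hB j)
  rwa [B.sum_smul_circuit, map_sub, ge_iff_le, sub_nonneg] at this

theorem subset_of_map_le_map_coords [Fintype ι] (hw : IsGenericLift v w)
    (hB : B ∈ triangulation v w) {a : ι → ℝ} (ha : 0 ≤ a)
    (hle : w a ≤ w (B.coords (Fintype.linearCombination ℝ v a))) {j : ι} (hj : a j ≠ 0) :
    j ∈ B.1 := by
  have hsum : ∑ j, a j * w (B.circuit j) = 0 := by
    have := B.sum_smul_circuit a
    apply_fun w at this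
    simp only [map_sum, map_smul, smul_eq_mul] at this
    rw [this, map_sub]
    exact sub_eq_zero.2 (hle.antisymm (map_coords_le_of_mem_triangulation hB ha))
  have hterm := (Finset.sum_eq_zero_iff_of_nonneg fun j _ ↦ mul_nonneg (ha j) (hB j)).1 hsum j
    (mem_univ j)
  exact not_not.1 fun hjB ↦ mul_ne_zero hj (hw B j hjB) hterm

theorem subset_of_mem_triangulation_of_coords_pos [Finite ι] (hw : IsGenericLift v w)
    (hB : B ∈ triangulation v w) (hB' : B' ∈ triangulation v w) {y : E}
    (hy : ∀ i ∈ B.1, 0 < B.coords y i) (hy' : ∀ i ∈ B'.1, 0 < B'.coords y i) : B'.1 ⊆ B.1 := by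
  cases nonempty_fintype ι
  have hle := map_coords_le_of_mem_triangulation hB' (B.coords_nonneg fun i hi ↦ (hy i hi).le)
  intro j hj
  refine subset_of_map_le_map_coords hw hB (B'.coords_nonneg fun i hi ↦ (hy' i hi).le) ?_
    (hy' j hj).ne'
  rw [B'.linearCombination_coords]
  rwa [B.linearCombination_coords] at hle

theorem eq_of_mem_triangulation_of_coords_pos [Finite ι] (hw : IsGenericLift v w)
    (hB : B ∈ triangulation v w) (hB' : B' ∈ triangulation v w) {y : E}
    (hy : ∀ i ∈ B.1, 0 < B.coords y i) (hy' : ∀ i ∈ B'.1, 0 < B'.coords y i) : B = B' :=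
  Subtype.ext ((subset_of_mem_triangulation_of_coords_pos hw hB' hB hy' hy).antisymm
    (subset_of_mem_triangulation_of_coords_pos hw hB hB' hy hy'))

theorem pairwiseDisjoint_tile [Finite ι] (hw : IsGenericLift v w) {q : E}
    (hq : IsGenericPoint v q) :
    (triangulation v w).PairwiseDisjoint fun B ↦ B.tile q := by
  refine fun B hB B' hB' hne ↦ Set.disjoint_left.2 fun x hx hx' ↦ hne ?_
  obtain ⟨ε, hε⟩ := (eventually_coords_pos_iff_mem_tile hq x).exists
  exact eq_of_mem_triangulation_of_coords_pos hw hB hB' ((hε B).2 hx) ((hε B').2 hx')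

variable [Fintype ι] {h : E →ₗ[ℝ] ℝ}

theorem exists_mem_triangulation_coords_pos (hv : ∀ i, h (v i) = 1)
    (hspan : span ℝ (Set.range v) = ⊤) (hw : IsGenericLift v w) {y : E}
    (hy : y ∈ combinations (Set.Ici 0) v) (hgen : IsGenericPoint v y) :
    ∃ B ∈ triangulation v w, ∀ i ∈ B.1, 0 < B.coords y i := by
  obtain ⟨a₀, ha₀, ha₀y⟩ := hy
  obtain ⟨a, ⟨ha, hay⟩, hmin⟩ := (isCompact_setOf_linearCombination_eq hv y).exists_isMinOn
    ⟨a₀, fun i ↦ ha₀ i trivial, ha₀y⟩ (LinearMap.continuous_of_finiteDimensional w).continuousOn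
  have map_nonneg : ∀ {r : ι → ℝ}, Fintype.linearCombination ℝ v r = 0 →
      (∀ i, r i < 0 → a i ≠ 0) → 0 ≤ w r := map_nonneg_of_isMinOn ha hay hmin
  obtain ⟨B, hB⟩ := exists_subbasis_forall_mem_span hspan {i | a i ≠ 0}
  have hsupp : ∀ j ∉ B.1, a j = 0 := by
    intro j hj
    by_contra haj
    have hcircuit : ∀ i, B.circuit j i ≠ 0 → a i ≠ 0 := by
      intro i hi hai
      have hij : i ≠ j := fun h ↦ haj (h ▸ hai)
      refine hi ?_
      rw [B.circuit_apply_of_ne hij, B.coords_eq_zero_of_mem_span (hB j haj) (not_not.2 hai),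
        neg_zero]
    refine hw B j hj (le_antisymm ?_ ?_)
    · rw [← neg_nonneg, ← map_neg]
      refine map_nonneg (by rw [map_neg, B.linearCombination_circuit, neg_zero]) fun i hi ↦ ?_
      exact hcircuit i fun h ↦ by simp [h] at hi
    · exact map_nonneg (B.linearCombination_circuit j) fun i hi ↦ hcircuit i hi.ne
  have hcoords : B.coords y = a := hay ▸ B.coords_linearCombination hsupp
  have hpos : ∀ i ∈ B.1, 0 < a i := fun i hi ↦
    (ha i).lt_of_ne' (hcoords ▸ hgen B i hi)
  refine ⟨B, fun j ↦ map_nonneg (B.linearCombination_circuit j) fun i hi ↦ (hpos i ?_).ne', ?_⟩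
  · exact B.mem_of_circuit_neg hi
  · rwa [hcoords]

theorem mem_iUnion_tile_iff (hv : ∀ i, h (v i) = 1) (hspan : span ℝ (Set.range v) = ⊤)
    (hw : IsGenericLift v w) {q : E} (hq : IsGenericPoint v q) {x : E} :
    x ∈ ⋃ B ∈ triangulation v w, B.tile q ↔
      ∃ᶠ ε in 𝓝[>] (0 : ℝ), x + ε • q ∈ combinations (Set.Ici 0) v := by
  simp only [Set.mem_iUnion, exists_prop]
  have htile := eventually_coords_pos_iff_mem_tile hq x
  constructor
  · rintro ⟨B, -, hxB⟩
    refine Eventually.frequently (htile.mono fun ε hε ↦ ?_)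
    exact mem_combinations_of_coords_nonneg fun i hi ↦ ((hε B).2 hxB i hi).le
  · intro hfreq
    obtain ⟨ε, hmem, hgen, hε⟩ :=
      (hfreq.and_eventually ((eventually_isGenericPoint_add_smul hq x).and htile)).exists
    obtain ⟨B, hB, hpos⟩ := exists_mem_triangulation_coords_pos hv hspan hw hmem hgen
    exact ⟨B, hB, (hε B).1 hpos⟩

theorem iUnion_tile_eq_combinations_Ici (hv : ∀ i, h (v i) = 1)
    (hspan : span ℝ (Set.range v) = ⊤) (hw : IsGenericLift v w) {q : E}
    (hqv : q ∈ combinations (Set.Ioi 0) v) (hq : IsGenericPoint v q) :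
    ⋃ B ∈ triangulation v w, B.tile q = combinations (Set.Ici 0) v := by
  refine (Set.iUnion₂_subset fun B _ ↦ tile_subset_combinations B q).antisymm fun x hx ↦ ?_
  refine (mem_iUnion_tile_iff hv hspan hw hq).2 (Eventually.frequently ?_)
  filter_upwards [self_mem_nhdsWithin] with ε (hε : 0 < ε)
  exact combinations_Ioi_subset_Ici
    (add_mem_combinations_Ioi hx (smul_mem_combinations_Ioi hε hqv))

theorem iUnion_tile_neg_eq_combinations_Ioi (hv : ∀ i, h (v i) = 1)
    (hspan : span ℝ (Set.range v) = ⊤) (hw : IsGenericLift v w) {q : E}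
    (hqv : q ∈ combinations (Set.Ioi 0) v) (hq : IsGenericPoint v q) :
    ⋃ B ∈ triangulation v w, B.tile (-q) = combinations (Set.Ioi 0) v := by
  ext x
  rw [mem_iUnion_tile_iff hv hspan hw hq.neg]
  constructor
  · intro hfreq
    obtain ⟨ε, hmem, hε⟩ := (hfreq.and_eventually self_mem_nhdsWithin).exists
    simpa using add_mem_combinations_Ioi hmem (smul_mem_combinations_Ioi hε hqv)
  · intro hx
    obtain ⟨c, -, rfl⟩ := hqv
    refine ((eventually_add_smul_mem_combinations_Ioi hx (-c)).mono fun ε hε ↦ ?_).frequently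
    rw [← map_neg]
    exact combinations_Ioi_subset_Ici hε

end Triangulation

section ConeReciprocity

variable {E ι : Type*} [NormedAddCommGroup E] [NormedSpace ℝ E] [Fintype ι] {v : ι → E}
  {Λ : Submodule ℤ E} [DiscreteTopology Λ] {h : E →ₗ[ℝ] ℝ}

theorem finite_levelPoints_combinations_Ici (hv : ∀ i, h (v i) = 1) (t : ℕ) :
    (levelPoints Λ h (combinations (Set.Ici 0) v) t).Finite := by
  have hcont : Continuous (Fintype.linearCombination ℝ v) :=
    LinearMap.continuous_of_finiteDimensional _
  have hcompact := (isCompact_Icc (a := (0 : ι → ℝ)) (b := fun _ ↦ (t : ℝ))).image hcont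
  refine (finite_inter_lattice_of_isCompact (Λ := Λ) hcompact).subset ?_
  rintro _ ⟨⟨a, ha, rfl⟩, hΛ, hat⟩
  rw [height_linearCombination hv] at hat
  exact ⟨⟨a, ⟨fun i ↦ ha i trivial, fun i ↦ hat ▸
    Finset.single_le_sum (fun j _ ↦ ha j trivial) (mem_univ i)⟩, rfl⟩, hΛ⟩

theorem exists_polynomial_cone_reciprocity (hv : ∀ i, h (v i) = 1) (hvΛ : ∀ i, v i ∈ Λ)
    (hspan : span ℝ (Set.range v) = ⊤) (hΛ : ∀ x ∈ Λ, ∃ m : ℤ, h x = m) {d : ℕ}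
    (hd : finrank ℝ E = d + 1) :
    ∃ p : ℚ[X], ∀ t : ℕ, 0 < t →
      p.eval (t : ℚ) = (levelPoints Λ h (combinations (Set.Ici 0) v) t).ncard ∧
      (-1) ^ d * p.eval (-t : ℚ) = (levelPoints Λ h (combinations (Set.Ioi 0) v) t).ncard := by
  classical
  obtain ⟨w, hw⟩ := exists_isGenericLift (v := v)
  obtain ⟨q, hqv, hq⟩ := exists_isGenericPoint (v := v)
  have hfin := finite_levelPoints_combinations_Ici (Λ := Λ) hv
  have := Fintype.ofFinite (triangulation v w)
  have (B : Subbasis v) : Fintype B.1 := Fintype.ofFinite B.1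
  have hb (B : Subbasis v) (i : B.1) : h (B.basis i) = 1 := by rw [B.basis_apply, hv]
  have hbΛ (B : Subbasis v) (i : B.1) : B.basis i ∈ Λ := by rw [B.basis_apply]; exact hvΛ i
  let S (B : Subbasis v) : Set B.1 := {i | B.coords q i < 0}
  refine ⟨∑ B ∈ (triangulation v w).toFinset, simplicialEhrhart B.basis (S B) Λ h d,
    fun t ht ↦ ⟨?_, ?_⟩⟩
  · have hclosed := iUnion_tile_eq_combinations_Ici hv hspan hw hqv hq
    rw [← hclosed, ncard_levelPoints_biUnion (pairwiseDisjoint_tile hw hq) (hclosed ▸ hfin t),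
      eval_finsetSum, Nat.cast_sum]
    exact Finset.sum_congr rfl fun B _ ↦ eval_simplicialEhrhart (hb B) (hbΛ B) hΛ hd ht
  · have hopen := iUnion_tile_neg_eq_combinations_Ioi hv hspan hw hqv hq
    have hfin' : (levelPoints Λ h (combinations (Set.Ioi 0) v) t).Finite :=
      (hfin t).subset fun x hx ↦ ⟨combinations_Ioi_subset_Ici hx.1, hx.2⟩
    rw [← hopen, ncard_levelPoints_biUnion (pairwiseDisjoint_tile hw hq.neg) (hopen ▸ hfin'),
      eval_finsetSum, Nat.cast_sum, mul_sum]
    refine Finset.sum_congr rfl fun B _ ↦ ?_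
    rw [neg_one_pow_mul_eval_neg_simplicialEhrhart (hb B) (hbΛ B) hd, tile_neg hq,
      eval_simplicialEhrhart (hb B) (hbΛ B) hΛ hd ht]

theorem exists_polynomial_cone_reciprocity_of_finrank_span
    (hv : ∀ i, h (v i) = 1) (hvΛ : ∀ i, v i ∈ Λ) (hΛ : ∀ x ∈ Λ, ∃ m : ℤ, h x = m) {d : ℕ}
    (hd : finrank ℝ (span ℝ (Set.range v)) = d + 1) :
    ∃ p : ℚ[X], ∀ t : ℕ, 0 < t →
      p.eval (t : ℚ) = (levelPoints Λ h (combinations (Set.Ici 0) v) t).ncard ∧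
      (-1) ^ d * p.eval (-t : ℚ) = (levelPoints Λ h (combinations (Set.Ioi 0) v) t).ncard := by
  set W := span ℝ (Set.range v)
  let v' (i : ι) : W := ⟨v i, subset_span ⟨i, rfl⟩⟩
  let Λ' : Submodule ℤ W := Λ.comap (W.subtype.restrictScalars ℤ)
  have : DiscreteTopology Λ' := DiscreteTopology.of_continuous_injective
    (f := fun x : Λ' ↦ (⟨x.1, x.2⟩ : Λ)) (by fun_prop)
    fun x y hxy ↦ Subtype.ext (Subtype.ext congr(($hxy : E)))
  have hcount (R : Set ℝ) (t : ℕ) : (levelPoints Λ h (combinations R v) t).ncard =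
      (levelPoints Λ' (h ∘ₗ W.subtype) (combinations R v') t).ncard := by
    rw [← Set.ncard_image_of_injective _ W.injective_subtype]
    congr 1
    have himage : W.subtype '' combinations R v' = combinations R v := image_combinations _ R
    rw [← himage]
    ext x
    constructor
    · rintro ⟨⟨y, hy, rfl⟩, hyΛ⟩
      exact ⟨y, ⟨hy, hyΛ⟩, rfl⟩
    · rintro ⟨y, ⟨hy, hyΛ⟩, rfl⟩
      exact ⟨⟨y, hy, rfl⟩, hyΛ⟩
  have hspan : span ℝ (Set.range v') = ⊤ := by
    apply map_injective_of_injective W.injective_subtype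
    rw [map_span, ← Set.range_comp, Submodule.map_top, range_subtype]
    rfl
  simp only [hcount]
  exact exists_polynomial_cone_reciprocity (v := v') (Λ := Λ') (h := h ∘ₗ W.subtype) hv hvΛ hspan
    (fun x hx ↦ hΛ x hx) hd

end ConeReciprocity

section Homogenization

variable {F ι : Type*} [AddCommGroup F] [Module ℝ F] {w : ι → F}

/-- The generators `(w i, 1)` of the cone over the convex hull of the points `w i`. -/
def homogenize (w : ι → F) (i : ι) : F × ℝ :=
  (w i, 1)

theorem span_range_homogenize (i₀ : ι) :
    span ℝ (Set.range (homogenize w)) =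
      (vectorSpan ℝ (Set.range w)).map (LinearMap.inl ℝ F ℝ) ⊔ span ℝ {homogenize w i₀} := by
  have hdiff (i : ι) : LinearMap.inl ℝ F ℝ (w i -ᵥ w i₀) = homogenize w i - homogenize w i₀ := by
    simp [homogenize]
  apply le_antisymm
  · rw [span_le]
    rintro _ ⟨i, rfl⟩
    rw [← sub_add_cancel (homogenize w i) (homogenize w i₀), ← hdiff]
    exact add_mem_sup (mem_map_of_mem (vsub_mem_vectorSpan ℝ ⟨i, rfl⟩ ⟨i₀, rfl⟩))
      (mem_span_singleton_self _)
  · rw [vectorSpan_range_eq_span_range_vsub_right ℝ w i₀, map_span, sup_le_iff, span_le,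
      ← Set.range_comp, span_singleton_le_iff_mem]
    refine ⟨?_, subset_span ⟨i₀, rfl⟩⟩
    rintro _ ⟨i, rfl⟩
    rw [Function.comp_apply, hdiff]
    exact sub_mem (subset_span ⟨i, rfl⟩) (subset_span ⟨i₀, rfl⟩)

theorem finrank_span_range_homogenize [FiniteDimensional ℝ F] [Nonempty ι] :
    finrank ℝ (span ℝ (Set.range (homogenize w))) =
      finrank ℝ (vectorSpan ℝ (Set.range w)) + 1 := by
  let i₀ : ι := Classical.arbitrary ι
  let f : vectorSpan ℝ (Set.range w) × ℝ →ₗ[ℝ] F × ℝ :=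
    (LinearMap.inl ℝ F ℝ ∘ₗ Submodule.subtype _).coprod
      (LinearMap.toSpanSingleton ℝ _ (homogenize w i₀))
  have hf : Function.Injective f := by
    rw [← LinearMap.ker_eq_bot, LinearMap.ker_eq_bot']
    rintro ⟨u, s⟩ hus
    obtain ⟨hu, rfl⟩ : (u : F) + s • w i₀ = 0 ∧ s = 0 := by simpa [f, homogenize] using hus
    simpa using hu
  have hrange : LinearMap.range f = span ℝ (Set.range (homogenize w)) := by
    rw [span_range_homogenize i₀, LinearMap.range_coprod, LinearMap.range_comp, range_subtype,
      LinearMap.range_toSpanSingleton]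
  rw [← hrange, LinearMap.finrank_range_of_inj hf, finrank_prod, finrank_self]

variable [Fintype ι]

theorem mem_combinations_homogenize {R : Set ℝ} {x : F} {s : ℝ} :
    (x, s) ∈ combinations R (homogenize w) ↔
      ∃ a : ι → ℝ, (∀ i, a i ∈ R) ∧ ∑ i, a i • w i = x ∧ ∑ i, a i = s := by
  simp [combinations, homogenize, Fintype.linearCombination_apply, Prod.ext_iff, Prod.fst_sum,
    Prod.snd_sum]

theorem exists_mem_combinations_Ioi_homogenize [Nonempty ι] :
    ∃ z, (z, 1) ∈ combinations (Set.Ioi 0) (homogenize w) := by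
  refine ⟨_, mem_combinations_homogenize.2 ⟨fun _ ↦ (Fintype.card ι : ℝ)⁻¹, fun _ ↦ ?_, rfl, ?_⟩⟩
  · exact (inv_pos (G₀ := ℝ)).2 (Nat.cast_pos.2 Fintype.card_pos)
  · simp

theorem mem_convexHull_range_iff {x : F} :
    x ∈ convexHull ℝ (Set.range w) ↔ (x, 1) ∈ combinations (Set.Ici 0) (homogenize w) := by
  classical
  have hbasis : Fintype.linearCombination ℝ w ∘ (fun i j ↦ if i = j then 1 else 0) = w := by
    ext i
    simp [Fintype.linearCombination_apply]
  have himage : convexHull ℝ (Set.range w) = Fintype.linearCombination ℝ w '' stdSimplex ℝ ι := by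
    conv_lhs => rw [← hbasis, Set.range_comp, ← LinearMap.image_convexHull,
      convexHull_basis_eq_stdSimplex]
  rw [himage, mem_combinations_homogenize]
  simp only [stdSimplex, Set.mem_image, Set.mem_ofPred_eq, Set.mem_Ici,
    Fintype.linearCombination_apply]
  exact exists_congr fun _ ↦ by tauto

theorem ncard_levelPoints_homogenize {Λ : Submodule ℤ F} {R : Set ℝ}
    (hR : ∀ c : ℝ, 0 < c → ∀ r ∈ R, c * r ∈ R) {P : Set F}
    (hP : ∀ x, x ∈ P ↔ (x, 1) ∈ combinations R (homogenize w)) {t : ℕ} (ht : 0 < t) :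
    (levelPoints (prodInt Λ) (LinearMap.snd ℝ F ℝ) (combinations R (homogenize w)) t).ncard =
      ((t : ℝ) • P ∩ Λ).ncard := by
  have ht' : 0 < (t : ℝ) := Nat.cast_pos.2 ht
  have hmem (x : F) : x ∈ (t : ℝ) • P ↔ (x, (t : ℝ)) ∈ combinations R (homogenize w) := by
    rw [Set.mem_smul_set_iff_inv_smul_mem₀ ht'.ne', hP]
    constructor <;> intro hx
    · simpa [ht'.ne'] using smul_mem_combinations (hR t ht') hx
    · simpa [ht'.ne'] using smul_mem_combinations (hR _ (inv_pos.2 ht')) hx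
  have himage : levelPoints (prodInt Λ) (LinearMap.snd ℝ F ℝ) (combinations R (homogenize w)) t =
      (·, (t : ℝ)) '' ((t : ℝ) • P ∩ Λ) := by
    ext ⟨x, s⟩
    constructor
    · rintro ⟨hx, hxΛ, rfl : s = t⟩
      exact ⟨x, ⟨(hmem x).2 hx, (mem_prodInt.1 hxΛ).1⟩, rfl⟩
    · rintro ⟨x, ⟨hx, hxΛ⟩, ⟨⟩⟩
      exact ⟨(hmem x).1 hx, mem_prodInt.2 ⟨hxΛ, t, rfl⟩, rfl⟩
  rw [himage, Set.ncard_image_of_injective _ (Prod.mk_left_injective _)]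

end Homogenization

section RelativeInterior

variable {F : Type*} [NormedAddCommGroup F] [NormedSpace ℝ F] {P : Set F}

theorem openSegment_intrinsicInterior_self_subset_intrinsicInterior (hP : Convex ℝ P) {y z : F}
    (hy : y ∈ P) (hz : z ∈ intrinsicInterior ℝ P) :
    openSegment ℝ y z ⊆ intrinsicInterior ℝ P := by
  obtain ⟨z, hz, rfl⟩ := hz
  lift y to affineSpan ℝ P using subset_affineSpan ℝ P hy
  have : Nonempty (affineSpan ℝ P) := ⟨y⟩
  rw [openSegment_eq_image_lineMap]
  rintro _ ⟨r, ⟨hr₀, hr₁⟩, rfl⟩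
  refine ⟨AffineMap.homothety y r z, ?_, rfl⟩
  have hopen : IsOpenMap (AffineMap.homothety y r) := AffineMap.homothety_isOpenMap y r hr₀.ne'
  refine interior_mono (Set.image_subset_iff.2 fun u hu ↦ ?_)
    (hopen.image_interior_subset _ (Set.mem_image_of_mem _ hz))
  exact hP.lineMap_mem hy hu ⟨hr₀.le, hr₁.le⟩

theorem exists_pos_add_smul_sub_mem {x z : F} (hx : x ∈ intrinsicInterior ℝ P) (hz : z ∈ P) :
    ∃ δ : ℝ, 0 < δ ∧ x + δ • (x - z) ∈ P := by
  obtain ⟨x, hx, rfl⟩ := hx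
  lift z to affineSpan ℝ P using subset_affineSpan ℝ P hz
  have : Nonempty (affineSpan ℝ P) := ⟨z⟩
  have hlim : Tendsto (fun δ : ℝ ↦ AffineMap.lineMap x z (-δ)) (𝓝[>] 0) (𝓝 x) :=
    ((AffineMap.lineMap_continuous.comp continuous_neg).tendsto' 0 x (by simp)).mono_left
      nhdsWithin_le_nhds
  obtain ⟨δ, hδ, hpos⟩ :=
    ((hlim.eventually_mem (mem_interior_iff_mem_nhds.1 hx)).and self_mem_nhdsWithin).exists
  refine ⟨δ, hpos, ?_⟩
  have heq : (AffineMap.lineMap x z (-δ) : affineSpan ℝ P) = x + δ • ((x : F) - z) := by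
    rw [AffineMap.lineMap_apply]
    simp only [neg_smul, AffineSubspace.coe_vadd, NegMemClass.coe_neg, SetLike.val_smul,
      AffineSubspace.coe_vsub, vsub_eq_sub, vadd_eq_add]
    module
  exact heq ▸ hδ

variable {ι : Type*} [Fintype ι] {w : ι → F} {x : F}

theorem mem_combinations_Ioi_homogenize_of_mem_intrinsicInterior
    (hx : x ∈ intrinsicInterior ℝ (convexHull ℝ (Set.range w))) :
    (x, 1) ∈ combinations (Set.Ioi 0) (homogenize w) := by
  have hι : Nonempty ι := Set.range_nonempty_iff_nonempty.1 <| convexHull_nonempty_iff.1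
    ⟨x, intrinsicInterior_subset hx⟩
  obtain ⟨z, hz⟩ := exists_mem_combinations_Ioi_homogenize (w := w)
  have hzP := mem_convexHull_range_iff.2 (combinations_Ioi_subset_Ici hz)
  obtain ⟨δ, hδ, hy⟩ := exists_pos_add_smul_sub_mem hx hzP
  have hsum := smul_mem_combinations_Ioi (inv_pos.2 (add_pos one_pos hδ))
    (add_mem_combinations_Ioi (mem_convexHull_range_iff.1 hy) (smul_mem_combinations_Ioi hδ hz))
  convert hsum using 1
  refine Prod.ext ?_ ?_
  · change x = (1 + δ)⁻¹ • (x + δ • (x - z) + δ • z)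
    rw [eq_inv_smul_iff₀ (by positivity)]
    module
  · change 1 = (1 + δ)⁻¹ * (1 + δ * 1)
    field_simp

variable [FiniteDimensional ℝ F]

theorem mem_intrinsicInterior_of_mem_combinations_Ioi_homogenize
    (hx : (x, 1) ∈ combinations (Set.Ioi 0) (homogenize w)) :
    x ∈ intrinsicInterior ℝ (convexHull ℝ (Set.range w)) := by
  have hP := convex_convexHull ℝ (Set.range w)
  obtain ⟨z, hz⟩ := Set.Nonempty.intrinsicInterior hP
    ⟨x, mem_convexHull_range_iff.2 (combinations_Ioi_subset_Ici hx)⟩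
  obtain ⟨c, -, hc⟩ := mem_convexHull_range_iff.1 (intrinsicInterior_subset hz)
  obtain ⟨ε, hmem, hε₀, hε₁⟩ :=
    ((eventually_add_smul_mem_combinations_Ioi hx (-c)).and (Ioo_mem_nhdsGT one_pos)).exists
  have hpos : 0 < 1 - ε := sub_pos.2 hε₁
  have hy : ((1 - ε)⁻¹ • (x - ε • z), (1 : ℝ)) ∈ combinations (Set.Ioi 0) (homogenize w) := by
    convert smul_mem_combinations_Ioi (inv_pos.2 hpos) hmem using 1
    rw [map_neg, hc, smul_neg, ← sub_eq_add_neg]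
    refine Prod.ext rfl ?_
    change 1 = (1 - ε)⁻¹ * (1 - ε * 1)
    rw [mul_one, inv_mul_cancel₀ hpos.ne']
  refine openSegment_intrinsicInterior_self_subset_intrinsicInterior hP
    (mem_convexHull_range_iff.2 (combinations_Ioi_subset_Ici hy)) hz
    ⟨1 - ε, ε, hpos, hε₀, sub_add_cancel 1 ε, ?_⟩
  rw [smul_inv_smul₀ hpos.ne', sub_add_cancel]

theorem mem_intrinsicInterior_convexHull_range_iff :
    x ∈ intrinsicInterior ℝ (convexHull ℝ (Set.range w)) ↔
      (x, 1) ∈ combinations (Set.Ioi 0) (homogenize w) :=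
  ⟨mem_combinations_Ioi_homogenize_of_mem_intrinsicInterior,
    mem_intrinsicInterior_of_mem_combinations_Ioi_homogenize⟩

end RelativeInterior

section LatticePolytope

theorem exists_polynomial_convexHull_reciprocity {F : Type*} [NormedAddCommGroup F]
    [NormedSpace ℝ F] [FiniteDimensional ℝ F] {Λ : Submodule ℤ F} [DiscreteTopology Λ] {V : Set F}
    (hfin : V.Finite) (hne : V.Nonempty) (hVΛ : V ⊆ Λ) :
    ∃ p : ℚ[X], ∀ t : ℕ, 0 < t →
      p.eval (t : ℚ) = ((t : ℝ) • convexHull ℝ V ∩ Λ).ncard ∧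
      (-1) ^ finrank ℝ (vectorSpan ℝ V) * p.eval (-t : ℚ) =
        ((t : ℝ) • intrinsicInterior ℝ (convexHull ℝ V) ∩ Λ).ncard := by
  have := hfin.fintype
  have := hne.to_subtype
  let w : V → F := Subtype.val
  have hw : Set.range w = V := Subtype.range_coe
  have hwΛ (i : V) : homogenize w i ∈ prodInt Λ :=
    mem_prodInt.2 ⟨hVΛ i.2, 1, Int.cast_one.symm⟩
  obtain ⟨p, hp⟩ := exists_polynomial_cone_reciprocity_of_finrank_span
    (h := LinearMap.snd ℝ F ℝ) (fun _ ↦ rfl) hwΛ (fun x hx ↦ (mem_prodInt.1 hx).2)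
    finrank_span_range_homogenize
  refine ⟨p, fun t ht ↦ ?_⟩
  have hclosed := ncard_levelPoints_homogenize (R := Set.Ici 0) (Λ := Λ)
    (fun c hc r hr ↦ mul_nonneg hc.le hr) (fun x ↦ mem_convexHull_range_iff (w := w)) ht
  have hopen := ncard_levelPoints_homogenize (R := Set.Ioi 0) (Λ := Λ)
    (fun c hc r hr ↦ mul_pos hc hr) (fun x ↦ mem_intrinsicInterior_convexHull_range_iff (w := w)) ht
  rw [hw] at hp hclosed hopen
  rw [← hclosed, ← hopen]
  exact hp t ht

theorem eq_of_forall_pos_eval_natCast_eq {R : Type*} [CommRing R] [IsDomain R] [CharZero R]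
    {p q : R[X]} (h : ∀ t : ℕ, 0 < t → p.eval (t : R) = q.eval (t : R)) : p = q := by
  refine eq_of_infinite_eval_eq p q ?_
  refine ((Set.Ioi_infinite (0 : ℕ)).image Nat.cast_injective.injOn).mono ?_
  rintro _ ⟨t, ht, rfl⟩
  exact h t ht

theorem mem_span_int_range_basisFun_iff {ι : Type*} [Finite ι] {x : ι → ℝ} :
    x ∈ span ℤ (Set.range (Pi.basisFun ℝ ι)) ↔ ∀ i, ∃ m : ℤ, x i = m := by
  simp [Basis.mem_span_iff_repr_mem, eq_comm]

theorem latticeCount_eq_ncard_inter_span {n : ℕ} (S : Set (Fin n → ℝ)) :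
    latticeCount S = (S ∩ span ℤ (Set.range (Pi.basisFun ℝ (Fin n)))).ncard := by
  simp only [latticeCount, ← mem_span_int_range_basisFun_iff]
  rfl

end LatticePolytope

end EhrhartMacdonald

open Module Polynomial EhrhartMacdonald in
theorem stmt12_general {F : Type*} [NormedAddCommGroup F] [NormedSpace ℝ F]
    [FiniteDimensional ℝ F] {Λ : Submodule ℤ F} [DiscreteTopology Λ] {V : Set F}
    (hfin : V.Finite) (hne : V.Nonempty) (hVΛ : V ⊆ Λ) {L : ℚ[X]}
    (hL : ∀ t : ℕ, 0 < t → L.eval (t : ℚ) = ((t : ℝ) • convexHull ℝ V ∩ Λ).ncard) :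
    ∀ t : ℕ, 0 < t →
      (-1) ^ finrank ℝ (affineSpan ℝ (convexHull ℝ V)).direction * L.eval (-t : ℚ) =
        ((t : ℝ) • intrinsicInterior ℝ (convexHull ℝ V) ∩ Λ).ncard := by
  obtain ⟨p, hp⟩ := exists_polynomial_convexHull_reciprocity hfin hne hVΛ
  obtain rfl : L = p := eq_of_forall_pos_eval_natCast_eq fun t ht ↦ by rw [hL t ht, (hp t ht).1]
  rw [affineSpan_convexHull, direction_affineSpan]
  exact fun t ht ↦ (hp t ht).2

theorem stmt12 (n d : ℕ) (V : Finset (Fin n → ℤ)) (hV : V.Nonempty)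
    (P : Set (Fin n → ℝ))
    (hP : P = convexHull ℝ ((fun (v : Fin n → ℤ) (i : Fin n) => (v i : ℝ)) '' V))
    (hd : Module.finrank ℝ (affineSpan ℝ P).direction = d)
    (L : Polynomial ℚ)
    (hL : ∀ t : ℕ, 0 < t → L.eval (t : ℚ) = latticeCount ((t : ℝ) • P)) :
    ∀ t : ℕ, 0 < t →
      (-1 : ℚ) ^ d * L.eval (-(t : ℚ)) =
        latticeCount ((t : ℝ) • intrinsicInterior ℝ P) := by
  subst hP hd
  simp only [EhrhartMacdonald.latticeCount_eq_ncard_inter_span] at hL ⊢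
  refine stmt12_general (V.finite_toSet.image _) (hV.to_set.image _) ?_ hL
  exact Set.image_subset_iff.2 fun v _ ↦
    EhrhartMacdonald.mem_span_int_range_basisFun_iff.2 fun i ↦ ⟨v i, rfl⟩
end

section
/- Let P ⊂ ℝⁿ be a rational polytope of dimension d with denominator s (the least positive integer with s·P integral). Then the function t ↦ #(t·P ∩ ℤⁿ) for t ∈ ℤ_{>0} is a quasi-polynomial of degree d whose period divides s: for each residue 0 ≤ j < s there is a polynomial p_j of degree ≤ d with #(t·P ∩ ℤⁿ) = p_j(t) whenever t ≡ j (mod s), t > 0, and at least one p_j has degree exactly d. -/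
open Pointwise

/-- A subset of `ℝⁿ` is an integral polytope if it is the convex hull of
finitely many integer points. -/
def IsIntegralPolytope {n : ℕ} (S : Set (Fin n → ℝ)) : Prop :=
  ∃ W : Finset (Fin n → ℤ),
    S = convexHull ℝ ((fun (w : Fin n → ℤ) (i : Fin n) => (w i : ℝ)) '' W)

/-!
Place `s • P` at height `s` in `ℝⁿ × ℝ` and let `v i` be integral points there spanning it; then the
lattice points of `t • P` are the lattice points at height `t` of the cone generated by the `v i`.
Among all nonnegative coefficient vectors representing a point of the cone take the
lexicographically smallest one. Minimality of a nonnegative vector is inherited by every nonnegative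
vector supported in its support, and the generators in that support are linearly independent, so
there are at most `d + 1` of them. Hence each lattice point is uniquely a sum of a lattice point
with minimal coefficients in `(0, 1]` on their support and a nonnegative integer combination of the
generators in that support. There are finitely many summands of the first kind. One with support of
size `r + 1` and height `z` contributes to height `t` the number of ways to write `(t - z) / s` as a
sum of `r + 1` natural numbers. This is a binomial coefficient, a polynomial of degree `r` in `t` on
a residue class modulo `s`, and since `z ≤ s * (r + 1)` the formula is correct for every `t > 0`.
The degree `d` is attained because `d + 1` linearly independent generators already produce
`(k + d).choose d` lattice points at height `s * k`.
-/

open Module Polynomial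
open scoped Topology

section LexMin

variable {ι : Type*} [LinearOrder ι]

lemma exists_forall_toLex_le [Finite ι] {K : Set (ι → ℝ)} (hK : IsCompact K) (hne : K.Nonempty) :
    ∃ c ∈ K, ∀ c' ∈ K, toLex c ≤ toLex c' := by
  have := Fintype.ofFinite ι
  suffices h : ∀ s : Finset ι, ∃ c ∈ K, ∀ c' ∈ K, (∀ i ∈ s, c i = c' i) ∨
      ∃ i ∈ s, (∀ j ∈ s, j < i → c j = c' j) ∧ c i < c' i by
    obtain ⟨c, hc, hmin⟩ := h Finset.univ
    refine ⟨c, hc, fun c' hc' ↦ ?_⟩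
    rcases hmin c' hc' with heq | ⟨i, -, heq, hlt⟩
    · exact (congrArg toLex (funext fun i ↦ heq i (Finset.mem_univ i))).le
    · exact le_of_lt (show Pi.Lex _ _ _ _ from ⟨i, fun j hj ↦ heq j (Finset.mem_univ j) hj, hlt⟩)
  intro s
  induction s using Finset.induction_on_max with
  | empty => exact hne.imp fun c hc ↦ ⟨hc, fun _ _ ↦ .inl (by simp)⟩
  | insert a s ha ih =>
    obtain ⟨c₀, hc₀, hmin₀⟩ := ih
    have hclosed : IsClosed {c : ι → ℝ | ∀ i ∈ s, c₀ i = c i} := by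
      simp only [Set.ofPred_forall]
      exact isClosed_biInter fun i _ ↦ isClosed_eq continuous_const (continuous_apply i)
    obtain ⟨c, ⟨hc, hcs⟩, hmin⟩ := (hK.inter_right hclosed).exists_isMinOn
      ⟨c₀, hc₀, fun _ _ ↦ rfl⟩ (continuous_apply a).continuousOn
    refine ⟨c, hc, fun c' hc' ↦ ?_⟩
    rcases hmin₀ c' hc' with heq | ⟨i, hi, heq, hlt⟩
    · have hle : c a ≤ c' a := hmin ⟨hc', heq⟩
      grind
    · grind

lemma toLex_nonneg_of_smul [Finite ι] {μ : ι → ℝ} {ε : ℝ} (hε : 0 < ε)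
    (h : 0 ≤ toLex (ε • μ)) : 0 ≤ toLex μ := by
  contrapose! h
  obtain ⟨i, hlt, hi⟩ := h
  refine ⟨i, fun j hj ↦ ?_, ?_⟩
  · exact mul_eq_zero_of_right ε (hlt j hj)
  · exact mul_neg_of_pos_of_neg hε hi

lemma exists_pos_nonneg_add_smul {ι : Type*} [Finite ι] {c μ : ι → ℝ} (hc : 0 ≤ c)
    (hμ : ∀ i, c i = 0 → 0 ≤ μ i) :
    ∃ ε : ℝ, 0 < ε ∧ 0 ≤ c + ε • μ := by
  have hev : ∀ i, ∀ᶠ ε : ℝ in 𝓝[>] 0, 0 ≤ c i + ε * μ i := by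
    intro i
    rcases (hc i).eq_or_lt with hi | hi
    · filter_upwards [self_mem_nhdsWithin] with ε hε
      rw [← hi]
      exact add_nonneg le_rfl (mul_nonneg (le_of_lt hε) (hμ i hi.symm))
    · have hlim : Filter.Tendsto (fun ε : ℝ ↦ c i + ε * μ i) (𝓝[>] 0) (𝓝 (c i)) :=
        (Continuous.tendsto' (by fun_prop) 0 _ (by simp)).mono_left nhdsWithin_le_nhds
      exact (hlim.eventually (lt_mem_nhds hi)).mono fun _ ↦ le_of_lt
  obtain ⟨ε, hε, hε₀⟩ := ((Filter.eventually_all.2 hev).and self_mem_nhdsWithin).exists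
  exact ⟨ε, hε₀, hε⟩

variable {E : Type*} [AddCommGroup E] [Module ℝ E]

/-- A nonnegative coefficient vector `c` is lexicographically minimal for `L` if it is the
lexicographically smallest among the nonnegative vectors with the same image under `L`. When `L`
sends the standard basis to the generators of a cone, this selects one representation of each point
of the cone. -/
def IsLexMin (L : (ι → ℝ) →ₗ[ℝ] E) (c : ι → ℝ) : Prop :=
  0 ≤ c ∧ ∀ c', 0 ≤ c' → L c' = L c → toLex c ≤ toLex c'

namespace IsLexMin

variable [Finite ι] {L : (ι → ℝ) →ₗ[ℝ] E} {c c' μ : ι → ℝ}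

lemma toLex_nonneg (hc : IsLexMin L c) (hL : L μ = 0) (hμ : ∀ i, c i = 0 → 0 ≤ μ i) :
    0 ≤ toLex μ := by
  obtain ⟨ε, hε, hnonneg⟩ := exists_pos_nonneg_add_smul hc.1 hμ
  have hle : toLex c ≤ toLex (c + ε • μ) :=
    hc.2 _ hnonneg (by rw [map_add, map_smul, hL, smul_zero, add_zero])
  rw [toLex_add] at hle
  exact toLex_nonneg_of_smul hε ((le_add_iff_nonneg_right _).1 hle)

lemma eq_zero (hc : IsLexMin L c) (hL : L μ = 0) (hμ : ∀ i, c i = 0 → μ i = 0) : μ = 0 := by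
  have hneg : 0 ≤ toLex (-μ) := hc.toLex_nonneg (by simp [hL]) fun i hi ↦ by simp [hμ i hi]
  exact toLex.injective <| le_antisymm (neg_nonneg.1 hneg) <|
    hc.toLex_nonneg hL fun i hi ↦ (hμ i hi).ge

lemma of_support (hc : IsLexMin L c) (hc' : 0 ≤ c') (hsupp : ∀ i, c i = 0 → c' i = 0) :
    IsLexMin L c' := by
  refine ⟨hc', fun c'' hc'' hL ↦ sub_nonneg.1 ?_⟩
  exact hc.toLex_nonneg (μ := c'' - c') (by simp [hL]) fun i hi ↦ by simpa [hsupp i hi] using hc'' i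

end IsLexMin

lemma injOn_setOf_isLexMin (L : (ι → ℝ) →ₗ[ℝ] E) : Set.InjOn L {c | IsLexMin L c} :=
  fun _ hc _ hc' h ↦ toLex.injective <| le_antisymm (hc.2 _ hc'.1 h.symm) (hc'.2 _ hc.1 h)

lemma IsLexMin.linearIndepOn_support [Fintype ι] {v : ι → E} {c : ι → ℝ}
    (hc : IsLexMin (Fintype.linearCombination ℝ v) c) : LinearIndepOn ℝ v {i | c i ≠ 0} := by
  refine linearIndepOn_iff''.2 fun t μ ht hμ hsum i _ ↦ congrFun (hc.eq_zero ?_ ?_) i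
  · rwa [Fintype.linearCombination_apply,
      ← Finset.sum_subset t.subset_univ fun i _ hi ↦ by rw [hμ i hi, zero_smul]]
  · exact fun i hi ↦ hμ i fun hit ↦ ht hit hi

lemma IsLexMin.card_support_le [Fintype ι] {v : ι → E} {c : ι → ℝ}
    (hc : IsLexMin (Fintype.linearCombination ℝ v) c) :
    Finset.card {i | c i ≠ 0} ≤ finrank ℝ (Submodule.span ℝ (Set.range v)) := by
  have := FiniteDimensional.span_of_finite ℝ (Set.finite_range v)
  rw [← Fintype.card_subtype]
  calc Fintype.card {i // c i ≠ 0}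
      = finrank ℝ (Submodule.span ℝ (Set.range fun i : {i // c i ≠ 0} ↦ v i)) :=
        (finrank_span_eq_card hc.linearIndepOn_support).symm
    _ ≤ finrank ℝ (Submodule.span ℝ (Set.range v)) :=
        Submodule.finrank_mono (Submodule.span_mono (Set.range_comp_subset_range _ v))

end LexMin

section QuasiPolynomial

/-- A counting function is a quasi-polynomial of period `s` and degree at most `d` if on every
residue class modulo `s` it agrees with a polynomial of degree at most `d`. The value at `0` is left
free, so that the functions whose formula fails only there qualify. -/
def IsQuasiPolynomial (s d : ℕ) (g : ℕ → ℕ) : Prop :=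
  ∀ j, ∃ p : ℚ[X], p.degree ≤ d ∧ ∀ t, 0 < t → t % s = j → p.eval (t : ℚ) = g t

lemma IsQuasiPolynomial.congr {s d : ℕ} {g g' : ℕ → ℕ} (hg : IsQuasiPolynomial s d g)
    (h : ∀ t, 0 < t → g t = g' t) : IsQuasiPolynomial s d g' := by
  intro j
  obtain ⟨p, hdeg, hp⟩ := hg j
  exact ⟨p, hdeg, fun t ht htj ↦ by rw [hp t ht htj, h t ht]⟩

lemma IsQuasiPolynomial.sum {κ : Type*} {I : Finset κ} {s d : ℕ} {g : κ → ℕ → ℕ}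
    (hg : ∀ i ∈ I, IsQuasiPolynomial s d (g i)) :
    IsQuasiPolynomial s d (fun t ↦ ∑ i ∈ I, g i t) := by
  intro j
  choose! p hdeg hp using fun i hi ↦ hg i hi j
  refine ⟨∑ i ∈ I, p i, (degree_sum_le _ _).trans (Finset.sup_le hdeg), fun t ht htj ↦ ?_⟩
  rw [eval_finsetSum, Nat.cast_sum]
  exact Finset.sum_congr rfl fun i hi ↦ hp i hi t ht htj

lemma exists_degree_le_eval_eq_choose (r : ℕ) {s : ℚ} (hs : s ≠ 0) (e : ℚ) :
    ∃ p : ℚ[X], p.degree ≤ r ∧ ∀ a : ℕ, p.eval (s * a + e) = a.choose r := by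
  refine ⟨C (r.factorial : ℚ)⁻¹ * (descPochhammer ℚ r).comp (C s⁻¹ * (X - C e)), ?_, fun a ↦ ?_⟩
  · refine natDegree_le_iff_degree_le.1 ((natDegree_C_mul_le _ _).trans ?_)
    calc natDegree ((descPochhammer ℚ r).comp (C s⁻¹ * (X - C e)))
        ≤ r * natDegree (C s⁻¹ * (X - C e)) :=
          natDegree_comp_le.trans_eq (by rw [descPochhammer_natDegree])
      _ ≤ r * 1 := by gcongr; exact (natDegree_C_mul_le _ _).trans (natDegree_X_sub_C_le _)
      _ = r := mul_one r
  · have harg : s⁻¹ * (s * a + e - e) = a := by field_simp; ring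
    simp only [eval_mul, eval_C, eval_comp, eval_sub, eval_X, harg,
      Nat.cast_choose_eq_descPochhammer_div, div_eq_inv_mul]

lemma degree_eq_of_pow_le {p : ℚ[X]} {s d : ℕ} {C : ℚ} (hs : 0 < s) (hC : 0 < C)
    (hp : p.degree ≤ d) (h : ∀ k : ℕ, 0 < k → (k : ℚ) ^ d ≤ C * p.eval ((s * k : ℕ) : ℚ)) :
    p.degree = d := by
  refine hp.antisymm (not_lt.1 fun hlt ↦ ?_)
  have htend : Filter.Tendsto (fun k : ℕ ↦ ((s * k : ℕ) : ℚ)) Filter.atTop Filter.atTop :=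
    tendsto_natCast_atTop_atTop.comp (Filter.tendsto_id.const_mul_atTop' hs)
  have hlim := (div_tendsto_atTop_zero_of_degree_lt p (X ^ d) (by rwa [degree_X_pow])).comp htend
  have : (0 : ℚ) < s := Nat.cast_pos.2 hs
  have hpos : 0 < (C * s ^ d)⁻¹ := by positivity
  obtain ⟨k, hk, hk₀⟩ := ((hlim.eventually (gt_mem_nhds hpos)).and
    (Filter.eventually_gt_atTop 0)).exists
  have : (0 : ℚ) < k := Nat.cast_pos.2 hk₀
  have hlt : C * p.eval ((s * k : ℕ) : ℚ) < k ^ d := by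
    simp only [Function.comp_apply, eval_pow, eval_X] at hk
    rw [div_lt_iff₀ (by positivity)] at hk
    calc C * p.eval ((s * k : ℕ) : ℚ) < C * ((C * s ^ d)⁻¹ * ((s * k : ℕ) : ℚ) ^ d) := by gcongr
      _ = k ^ d := by push_cast; rw [mul_pow]; field_simp
  exact hlt.not_ge (h k hk₀)

end QuasiPolynomial

section Antidiagonal

variable {ι : Type*}

lemma card_piAntidiag_nat [DecidableEq ι] (S : Finset ι) (q : ℕ) :
    (S.piAntidiag q).card = (S.card + q - 1).choose q := by
  rw [← Finset.card_finsuppAntidiag_nat_eq_choose, Finset.finsuppAntidiag, Finset.card_map,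
    Finset.card_attach]

lemma ncard_setOf_sum_add_eq {S : Finset ι} {r : ℕ} (hS : S.card = r + 1) (a : ℕ) :
    Set.ncard {m : ι → ℕ | (∀ i, m i ≠ 0 → i ∈ S) ∧ ∑ i ∈ S, m i + r = a} = a.choose r := by
  classical
  rcases lt_or_ge a r with har | hra
  · have hempty : {m : ι → ℕ | (∀ i, m i ≠ 0 → i ∈ S) ∧ ∑ i ∈ S, m i + r = a} = ∅ :=
      Set.eq_empty_of_forall_notMem fun m hm ↦ by have := hm.2; omega
    rw [hempty, Set.ncard_empty, Nat.choose_eq_zero_of_lt har]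
  · obtain ⟨q, rfl⟩ := Nat.exists_eq_add_of_le' hra
    have hset : {m : ι → ℕ | (∀ i, m i ≠ 0 → i ∈ S) ∧ ∑ i ∈ S, m i + r = q + r} =
        S.piAntidiag q := by
      ext m
      simp [and_comm]
    rw [hset, Set.ncard_coe_finset, card_piAntidiag_nat, hS, ← Nat.choose_symm_add]
    congr 1
    omega

/-- The multiplicity vectors on `S` that raise a point of height `z` to height `t`, when each
generator contributes height `s`. -/
def raisingVectors (S : Finset ι) (s : ℕ) (z t : ℤ) : Set (ι → ℕ) :=
  {m | (∀ i, m i ≠ 0 → i ∈ S) ∧ s * (∑ i ∈ S, m i : ℕ) + z = t}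

lemma exists_ncard_raisingVectors_eq_choose {S : Finset ι} {s r t : ℕ} {z : ℤ} (hs : 0 < s)
    (hS : S.card = r + 1) (hz : z ≤ s * S.card) (ht : 0 < t) (hdvd : (s : ℤ) ∣ t - z) :
    ∃ a : ℕ, (t : ℤ) = s * a + (z - s * r) ∧ (raisingVectors S s z t).ncard = a.choose r := by
  obtain ⟨q, hq⟩ := hdvd
  have hpos : 0 < s * (q + r + 1) := by
    rw [hS] at hz
    push_cast at hz
    linarith [Int.natCast_pos.2 ht]
  obtain ⟨a, ha⟩ := Int.eq_ofNat_of_zero_le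
    (Int.lt_add_one_iff.1 (pos_of_mul_pos_right hpos (Int.natCast_nonneg s)))
  have hta : (t : ℤ) = s * a + (z - s * r) := by
    rw [← ha]
    linarith
  refine ⟨a, hta, ?_⟩
  rw [← ncard_setOf_sum_add_eq hS, raisingVectors, hta]
  congr! 4 with m
  have hs' : (s : ℤ) ≠ 0 := Nat.cast_ne_zero.2 hs.ne'
  calc (s * (∑ i ∈ S, m i : ℕ) + z = s * a + (z - s * r) : Prop)
      ↔ (s : ℤ) * (∑ i ∈ S, m i + r : ℕ) = s * a := by
        push_cast
        constructor <;> intro h <;> linarith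
    _ ↔ ∑ i ∈ S, m i + r = a := by rw [mul_right_inj' hs', Nat.cast_inj]

lemma isQuasiPolynomial_ncard_raisingVectors {S : Finset ι} {s d : ℕ} {z : ℤ} (hs : 0 < s)
    (hS : S.card ≤ d + 1) (hz : z ≤ s * S.card) :
    IsQuasiPolynomial s d fun t ↦ (raisingVectors S s z t).ncard := by
  intro j
  have hdvd {t : ℕ} (htj : t % s = j) : (s : ℤ) ∣ t - z ↔ (s : ℤ) ∣ j - z := by
    refine dvd_iff_dvd_of_dvd_sub ?_
    rw [sub_sub_sub_cancel_right, ← htj, Int.natCast_mod]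
    exact Int.dvd_self_sub_emod
  by_cases hne : S.Nonempty ∧ (s : ℤ) ∣ j - z
  · obtain ⟨r, hr⟩ := Nat.exists_eq_add_of_le' hne.1.card_pos
    obtain ⟨p, hdeg, hp⟩ := exists_degree_le_eval_eq_choose r (s := s)
      (Nat.cast_ne_zero.2 hs.ne') (z - s * r : ℤ)
    refine ⟨p, hdeg.trans (Nat.cast_le.2 (by omega)), fun t ht htj ↦ ?_⟩
    obtain ⟨a, hta, hcard⟩ :=
      exists_ncard_raisingVectors_eq_choose hs hr hz ht ((hdvd htj).2 hne.2)
    calc p.eval (t : ℚ) = p.eval (s * a + (z - s * r : ℤ) : ℚ) := by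
          congr 1
          exact_mod_cast hta
      _ = (raisingVectors S s z t).ncard := by rw [hp, hcard]
  · refine ⟨0, by simp, fun t ht htj ↦ ?_⟩
    have hempty : raisingVectors S s z t = ∅ := by
      refine Set.eq_empty_of_forall_notMem fun m ⟨_, hm⟩ ↦ hne ⟨?_, (hdvd htj).1 ?_⟩
      · rw [Finset.nonempty_iff_ne_empty]
        rintro rfl
        simp only [Finset.card_empty, Finset.sum_empty, Nat.cast_zero, mul_zero] at hz hm
        omega
      · exact ⟨_, (eq_sub_of_add_eq hm).symm⟩
    simp only [hempty, Set.ncard_empty, eval_zero, Nat.cast_zero]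

end Antidiagonal

section BoxPart

variable {ι : Type*}

/-- The largest integer vector that can be subtracted from a nonnegative `c` without killing a
nonzero coordinate; the remainder `c - wholePart c` has its nonzero coordinates in `(0, 1]`.
The subtraction is truncated, so that zero coordinates have whole part zero. -/
noncomputable def wholePart (c : ι → ℝ) (i : ι) : ℕ := ⌈c i⌉₊ - 1

/-- The remainder of `c` modulo its whole part. -/
noncomputable def boxPart (c : ι → ℝ) (i : ι) : ℝ := c i - wholePart c i

variable {c f : ι → ℝ} {m : ι → ℕ} {i : ι}

lemma boxPart_eq_zero (hi : c i = 0) : boxPart c i = 0 := by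
  simp [boxPart, wholePart, hi]

lemma boxPart_pos (hi : 0 < c i) : 0 < boxPart c i := by
  rw [boxPart, wholePart, sub_pos, ← Nat.lt_ceil]
  exact Nat.sub_one_lt (Nat.ceil_pos.2 hi).ne'

lemma boxPart_ne_zero (hi : wholePart c i ≠ 0) : boxPart c i ≠ 0 :=
  (boxPart_pos (Nat.ceil_pos.1 (by rw [wholePart] at hi; omega))).ne'

lemma boxPart_le_one : boxPart c i ≤ 1 := by
  rw [boxPart, wholePart, sub_le_iff_le_add']
  calc c i ≤ ⌈c i⌉₊ := Nat.le_ceil _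
    _ ≤ ((⌈c i⌉₊ - 1 + 1 : ℕ) : ℝ) := by gcongr; omega
    _ = _ := Nat.cast_succ _

lemma boxPart_add_wholePart (c : ι → ℝ) : (fun i ↦ boxPart c i + wholePart c i) = c :=
  funext fun _ ↦ sub_add_cancel _ _

lemma wholePart_add_natCast (hf : 0 ≤ f) (hf₁ : f ≤ 1) (hm : ∀ i, m i ≠ 0 → f i ≠ 0) :
    wholePart (fun i ↦ f i + m i) = m := by
  funext i
  rw [wholePart, Nat.ceil_add_natCast (hf i)]
  rcases (hf i).eq_or_lt with hi | hi
  · have hmi : m i = 0 := by_contra fun hne ↦ hm i hne hi.symm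
    simp [← hi, hmi]
  · have hceil : ⌈f i⌉₊ = 1 :=
      le_antisymm (Nat.ceil_le.2 (by simpa using hf₁ i)) (Nat.ceil_pos.2 hi)
    omega

lemma boxPart_add_natCast (hf : 0 ≤ f) (hf₁ : f ≤ 1) (hm : ∀ i, m i ≠ 0 → f i ≠ 0) :
    boxPart (fun i ↦ f i + m i) = f := by
  funext i
  rw [boxPart, wholePart_add_natCast hf hf₁ hm, add_sub_cancel_right]

lemma injective_add_natCast (f : ι → ℝ) :
    Function.Injective fun (m : ι → ℕ) i ↦ f i + m i :=
  fun _ _ hm ↦ funext fun i ↦ Nat.cast_injective (add_left_cancel (congrFun hm i))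

end BoxPart

section Cone

variable {ι E : Type*} [AddCommGroup E] [Module ℝ E]

/-- The points of `Λ` at height `t` in the cone generated by `v`. -/
def latticeSlice (Λ : AddSubgroup E) (v : ι → E) (h : E →ₗ[ℝ] ℝ) (t : ℕ) : Set E :=
  {x ∈ Λ | x ∈ PointedCone.hull ℝ (Set.range v) ∧ h x = t}

variable [Fintype ι] {v : ι → E} {h : E →ₗ[ℝ] ℝ}

lemma mem_hull_range_iff {x : E} :
    x ∈ PointedCone.hull ℝ (Set.range v) ↔
      ∃ c : ι → ℝ, 0 ≤ c ∧ Fintype.linearCombination ℝ v c = x := by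
  rw [PointedCone.hull, Submodule.mem_span_range_iff_exists_fun]
  constructor
  · rintro ⟨c, rfl⟩
    exact ⟨fun i ↦ c i, fun i ↦ (c i).2, rfl⟩
  · rintro ⟨c, hc, rfl⟩
    exact ⟨fun i ↦ ⟨c i, hc i⟩, rfl⟩

lemma isCompact_setOf_nonneg_height_le (hv : ∀ i, 0 < h (v i)) (R : ℝ) :
    IsCompact {c : ι → ℝ | 0 ≤ c ∧ h (Fintype.linearCombination ℝ v c) ≤ R} := by
  have hclosed : IsClosed {c : ι → ℝ | 0 ≤ c ∧ h (Fintype.linearCombination ℝ v c) ≤ R} :=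
    isClosed_Ici.inter <| isClosed_le
      (h ∘ₗ Fintype.linearCombination ℝ v).continuous_of_finiteDimensional continuous_const
  refine isCompact_Icc.of_isClosed_subset (s := Set.Icc 0 fun i ↦ R / h (v i)) hclosed ?_
  rintro c ⟨hc, hR⟩
  refine ⟨hc, fun i ↦ (le_div_iff₀ (hv i)).2 (le_trans ?_ hR)⟩
  rw [Fintype.linearCombination_apply, map_sum]
  simp only [map_smul, smul_eq_mul]
  exact Finset.single_le_sum (f := fun i ↦ c i * h (v i))
    (fun j _ ↦ mul_nonneg (hc j) (hv j).le) (Finset.mem_univ i)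

lemma linearCombination_add_natCast (f : ι → ℝ) (m : ι → ℕ) :
    Fintype.linearCombination ℝ v (fun i ↦ f i + m i) =
      Fintype.linearCombination ℝ v f + ∑ i, m i • v i := by
  simp only [Fintype.linearCombination_apply, add_smul, Finset.sum_add_distrib,
    Nat.cast_smul_eq_nsmul]

lemma height_sum_nsmul {s : ℝ} (hv : ∀ i, h (v i) = s) (m : ι → ℕ) :
    h (∑ i, m i • v i) = s * (∑ i, m i : ℕ) := by
  simp only [map_sum, map_nsmul, hv, nsmul_eq_mul, Nat.cast_sum, Finset.mul_sum, mul_comm]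

lemma height_linearCombination {s : ℝ} (hv : ∀ i, h (v i) = s) (c : ι → ℝ) :
    h (Fintype.linearCombination ℝ v c) = s * ∑ i, c i := by
  simp only [Fintype.linearCombination_apply, map_sum, map_smul, hv, smul_eq_mul, Finset.mul_sum,
    mul_comm]

lemma sum_nsmul_mem_latticeSlice {Λ : AddSubgroup E} {s : ℕ} (hΛ : ∀ i, v i ∈ Λ)
    (hv : ∀ i, h (v i) = s) (m : ι → ℕ) :
    ∑ i, m i • v i ∈ latticeSlice Λ v h (s * ∑ i, m i) := by
  refine ⟨Λ.sum_mem fun i _ ↦ Λ.nsmul_mem (hΛ _) _, ?_, ?_⟩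
  · exact Submodule.sum_mem _ fun i _ ↦
      Submodule.smul_of_tower_mem _ _ (PointedCone.subset_hull (Set.mem_range_self _))
  · rw [height_sum_nsmul hv, Nat.cast_mul]

end Cone

section LatticeSlice

variable {ι E : Type*} [LinearOrder ι] [Fintype ι] [AddCommGroup E] [Module ℝ E]
  {v : ι → E} {h : E →ₗ[ℝ] ℝ}

lemma exists_isLexMin_eq (hv : ∀ i, 0 < h (v i)) {c : ι → ℝ} (hc : 0 ≤ c) :
    ∃ c', IsLexMin (Fintype.linearCombination ℝ v) c' ∧
      Fintype.linearCombination ℝ v c' = Fintype.linearCombination ℝ v c := by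
  set L := Fintype.linearCombination ℝ v
  have hclosed : IsClosed {c' | L c' = L c} := by
    have hker : {c' | L c' = L c} = (· - c) ⁻¹' (LinearMap.ker L : Set (ι → ℝ)) := by
      ext c'
      simp [sub_eq_zero]
    rw [hker]
    exact (LinearMap.ker L).closed_of_finiteDimensional.preimage (continuous_sub_right c)
  obtain ⟨c', ⟨⟨hc', -⟩, hLc'⟩, hmin⟩ := exists_forall_toLex_le
    ((isCompact_setOf_nonneg_height_le hv (h (L c))).inter_right hclosed) ⟨c, ⟨hc, le_rfl⟩, rfl⟩
  refine ⟨c', ⟨hc', fun c'' hc'' hL ↦ hmin c'' ?_⟩, hLc'⟩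
  have hLc'' : L c'' = L c := hL.trans hLc'
  exact ⟨⟨hc'', (congrArg h hLc'').le⟩, hLc''⟩

/-- The lexicographically minimal coefficient vectors of the points of `latticeSlice Λ v h t`. -/
def lexSlice (Λ : AddSubgroup E) (v : ι → E) (h : E →ₗ[ℝ] ℝ) (t : ℕ) : Set (ι → ℝ) :=
  {c | IsLexMin (Fintype.linearCombination ℝ v) c ∧ Fintype.linearCombination ℝ v c ∈ Λ ∧
    h (Fintype.linearCombination ℝ v c) = t}

/-- The lexicographically minimal coefficient vectors in the unit cube that represent a point
of `Λ`. -/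
def lexBox (Λ : AddSubgroup E) (v : ι → E) : Set (ι → ℝ) :=
  {f | IsLexMin (Fintype.linearCombination ℝ v) f ∧ f ≤ 1 ∧ Fintype.linearCombination ℝ v f ∈ Λ}

lemma image_lexSlice (hv : ∀ i, 0 < h (v i)) (Λ : AddSubgroup E) (t : ℕ) :
    Fintype.linearCombination ℝ v '' lexSlice Λ v h t = latticeSlice Λ v h t := by
  ext x
  constructor
  · rintro ⟨c, ⟨hc, hΛ, ht⟩, rfl⟩
    exact ⟨hΛ, mem_hull_range_iff.2 ⟨c, hc.1, rfl⟩, ht⟩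
  · rintro ⟨hΛ, hcone, ht⟩
    obtain ⟨c, hc, rfl⟩ := mem_hull_range_iff.1 hcone
    obtain ⟨c', hc', hLc'⟩ := exists_isLexMin_eq hv hc
    exact ⟨c', ⟨hc', hLc' ▸ hΛ, hLc' ▸ ht⟩, hLc'⟩

lemma ncard_lexSlice (hv : ∀ i, 0 < h (v i)) (Λ : AddSubgroup E) (t : ℕ) :
    (lexSlice Λ v h t).ncard = (latticeSlice Λ v h t).ncard := by
  rw [← image_lexSlice hv, Set.InjOn.ncard_image]
  exact (injOn_setOf_isLexMin _).mono fun c hc ↦ hc.1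

section Finite

variable [TopologicalSpace E] [IsTopologicalAddGroup E] [ContinuousSMul ℝ E] [T2Space E]
  (Λ : AddSubgroup E) [DiscreteTopology Λ]

lemma finite_setOf_isLexMin_mem {K : Set (ι → ℝ)} (hK : IsCompact K) :
    {c ∈ K | IsLexMin (Fintype.linearCombination ℝ v) c ∧
      Fintype.linearCombination ℝ v c ∈ Λ}.Finite := by
  set L := Fintype.linearCombination ℝ v
  have hLK : IsCompact (L '' K ∩ Λ) :=
    (hK.image L.continuous_of_finiteDimensional).inter_right AddSubgroup.isClosed_of_discrete
  have hfin : (L '' K ∩ Λ).Finite :=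
    hLK.finite (DiscreteTopology.isDiscrete.mono Set.inter_subset_right)
  refine Set.Finite.of_finite_image (hfin.subset ?_)
    ((injOn_setOf_isLexMin L).mono fun c hc ↦ hc.2.1)
  rintro _ ⟨c, ⟨hcK, -, hΛ⟩, rfl⟩
  exact ⟨⟨c, hcK, rfl⟩, hΛ⟩

lemma finite_lexBox : (lexBox Λ v).Finite :=
  (finite_setOf_isLexMin_mem Λ isCompact_Icc).subset fun _ ⟨hf, hf₁, hΛ⟩ ↦ ⟨⟨hf.1, hf₁⟩, hf, hΛ⟩

lemma finite_lexSlice (hv : ∀ i, 0 < h (v i)) (t : ℕ) : (lexSlice Λ v h t).Finite :=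
  (finite_setOf_isLexMin_mem Λ (isCompact_setOf_nonneg_height_le hv t)).subset
    fun _ ⟨hc, hΛ, ht⟩ ↦ ⟨⟨hc.1, ht.le⟩, hc, hΛ⟩

end Finite

lemma boxPart_mem_lexBox {Λ : AddSubgroup E} (hΛ : ∀ i, v i ∈ Λ) {t : ℕ} {c : ι → ℝ}
    (hc : c ∈ lexSlice Λ v h t) : boxPart c ∈ lexBox Λ v := by
  obtain ⟨hmin, hcΛ, -⟩ := hc
  refine ⟨hmin.of_support (fun i ↦ ?_) fun i ↦ boxPart_eq_zero, fun i ↦ boxPart_le_one, ?_⟩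
  · rcases (hmin.1 i).eq_or_lt with hi | hi
    · exact (boxPart_eq_zero hi.symm).ge
    · exact (boxPart_pos hi).le
  · rw [← boxPart_add_wholePart c, linearCombination_add_natCast] at hcΛ
    exact (Λ.add_mem_cancel_right (Λ.sum_mem fun i _ ↦ Λ.nsmul_mem (hΛ i) _)).1 hcΛ

lemma setOf_boxPart_eq {Λ : AddSubgroup E} {s : ℕ} (hΛ : ∀ i, v i ∈ Λ) (hv : ∀ i, h (v i) = s)
    {f : ι → ℝ} (hf : f ∈ lexBox Λ v) {z : ℤ} (hz : h (Fintype.linearCombination ℝ v f) = z)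
    (t : ℕ) :
    {c ∈ lexSlice Λ v h t | boxPart c = f} =
      (fun m i ↦ f i + m i) '' raisingVectors {i | f i ≠ 0} s z t := by
  have hheight (m : ι → ℕ) (hm : ∀ i, m i ≠ 0 → i ∈ ({i | f i ≠ 0} : Finset ι)) :
      h (Fintype.linearCombination ℝ v fun i ↦ f i + m i) = t ↔
        (s * (∑ i with f i ≠ 0, m i : ℕ) + z : ℤ) = t := by
    rw [linearCombination_add_natCast, map_add, hz, height_sum_nsmul hv, add_comm,
      ← Finset.sum_subset (Finset.subset_univ {i | f i ≠ 0}) fun i _ hi ↦ not_imp_comm.1 (hm i) hi]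
    exact_mod_cast Iff.rfl
  ext c
  constructor
  · rintro ⟨⟨-, -, ht⟩, rfl⟩
    have hsupp (i) (hi : wholePart c i ≠ 0) : i ∈ ({i | boxPart c i ≠ 0} : Finset ι) :=
      (Finset.mem_filter_univ i).2 (boxPart_ne_zero hi)
    rw [← boxPart_add_wholePart c] at ht
    exact ⟨wholePart c, ⟨hsupp, (hheight _ hsupp).1 ht⟩, boxPart_add_wholePart c⟩
  · rintro ⟨m, ⟨hm, ht⟩, rfl⟩
    have hsupp (i) (hi : m i ≠ 0) : f i ≠ 0 := (Finset.mem_filter_univ i).1 (hm i hi)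
    refine ⟨⟨hf.1.of_support (fun i ↦ ?_) fun i hi ↦ ?_, ?_, (hheight m hm).2 ht⟩, ?_⟩
    · exact add_nonneg (hf.1.1 i) (Nat.cast_nonneg _)
    · simp [hi, not_imp_comm.1 (hsupp i) (not_not.2 hi)]
    · rw [linearCombination_add_natCast]
      exact Λ.add_mem hf.2.2 (Λ.sum_mem fun i _ ↦ Λ.nsmul_mem (hΛ i) _)
    · exact boxPart_add_natCast hf.1.1 hf.2.1 hsupp

end LatticeSlice

section CountingFunction

variable {ι E : Type*} [Finite ι] [AddCommGroup E] [Module ℝ E] [TopologicalSpace E]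
  [IsTopologicalAddGroup E] [ContinuousSMul ℝ E] [T2Space E] {Λ : AddSubgroup E}
  [DiscreteTopology Λ] {v : ι → E} {h : E →ₗ[ℝ] ℝ}

lemma finite_latticeSlice (hv : ∀ i, 0 < h (v i)) (t : ℕ) : (latticeSlice Λ v h t).Finite := by
  have := Fintype.ofFinite ι
  let := IsWellOrder.linearOrder (WellOrderingRel (α := ι))
  rw [← image_lexSlice hv]
  exact (finite_lexSlice Λ hv t).image _

theorem isQuasiPolynomial_ncard_latticeSlice {s d : ℕ} (hs : 0 < s)
    (hint : ∀ x ∈ Λ, ∃ z : ℤ, h x = z) (hΛ : ∀ i, v i ∈ Λ) (hv : ∀ i, h (v i) = s)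
    (hd : finrank ℝ (Submodule.span ℝ (Set.range v)) ≤ d + 1) :
    IsQuasiPolynomial s d fun t ↦ (latticeSlice Λ v h t).ncard := by
  classical
  have := Fintype.ofFinite ι
  let := IsWellOrder.linearOrder (WellOrderingRel (α := ι))
  have hv₀ (i) : 0 < h (v i) := by simpa [hv i] using hs
  have hbox : (lexBox Λ v).Finite := finite_lexBox Λ
  choose! z hz using fun f (hf : f ∈ lexBox Λ v) ↦ hint _ hf.2.2
  have hcount (t : ℕ) : ∑ f ∈ hbox.toFinset, (raisingVectors {i | f i ≠ 0} s (z f) t).ncard =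
      (latticeSlice Λ v h t).ncard := by
    have hfin : (lexSlice Λ v h t).Finite := finite_lexSlice Λ hv₀ t
    rw [← ncard_lexSlice hv₀, Set.ncard_eq_toFinset_card _ hfin,
      Finset.card_eq_sum_card_fiberwise (f := boxPart) (t := hbox.toFinset)]
    · refine Finset.sum_congr rfl fun f hf ↦ ?_
      have hf : f ∈ lexBox Λ v := hbox.mem_toFinset.1 hf
      rw [← Set.ncard_image_of_injective _ (injective_add_natCast f),
        ← setOf_boxPart_eq hΛ hv hf (hz f hf), ← Set.ncard_coe_finset]
      simp
    · exact fun c hc ↦ hbox.mem_toFinset.2 (boxPart_mem_lexBox hΛ (hfin.mem_toFinset.1 hc))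
  refine (IsQuasiPolynomial.sum fun f hf ↦ ?_).congr fun t _ ↦ hcount t
  have hf : f ∈ lexBox Λ v := hbox.mem_toFinset.1 hf
  refine isQuasiPolynomial_ncard_raisingVectors hs (hf.1.card_support_le.trans hd) ?_
  have hsum : ∑ i, f i ≤ Finset.card {i | f i ≠ 0} := by
    rw [← Finset.sum_filter_ne_zero, ← nsmul_one, ← Finset.sum_const]
    exact Finset.sum_le_sum fun i _ ↦ hf.2.1 i
  have hle : (z f : ℝ) ≤ s * Finset.card {i | f i ≠ 0} := by
    rw [← hz f hf, height_linearCombination hv]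
    gcongr
  exact_mod_cast hle

theorem pow_le_factorial_mul_ncard_latticeSlice {s d : ℕ} (hs : 0 < s) (hΛ : ∀ i, v i ∈ Λ)
    (hv : ∀ i, h (v i) = s) (hd : finrank ℝ (Submodule.span ℝ (Set.range v)) = d + 1) (k : ℕ) :
    k ^ d ≤ d.factorial * (latticeSlice Λ v h (s * k)).ncard := by
  classical
  obtain ⟨κ, a, ha, hspan, hli⟩ := exists_linearIndependent' ℝ v
  have := Finite.of_injective a ha
  have := Fintype.ofFinite κ
  have hcard : Fintype.card κ = d + 1 := by rw [← finrank_span_eq_card hli, hspan, hd]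
  have hinj : Function.Injective fun m : κ → ℕ ↦ ∑ i, m i • (v ∘ a) i :=
    (hli.restrict_scalars' ℕ).fintypeLinearCombination_injective
  have hle : ((Finset.univ : Finset κ).piAntidiag k).card ≤ (latticeSlice Λ v h (s * k)).ncard := by
    have hv₀ (i) : 0 < h (v i) := by simpa [hv i] using hs
    rw [← Set.ncard_coe_finset, ← Set.ncard_image_of_injective _ hinj]
    refine Set.ncard_le_ncard ?_ (finite_latticeSlice hv₀ _)
    rintro _ ⟨m, hm, rfl⟩
    rw [← (Finset.mem_piAntidiag.1 hm).1]
    obtain ⟨hmem, hcone, ht⟩ :=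
      sum_nsmul_mem_latticeSlice (fun i ↦ hΛ (a i)) (fun i ↦ hv (a i)) m
    exact ⟨hmem, Submodule.span_mono (Set.range_comp_subset_range a v) hcone, ht⟩
  calc k ^ d ≤ (k + 1).ascFactorial d :=
        (Nat.pow_succ_le_ascFactorial k d).trans (Nat.ascFactorial_le d k.le_succ)
    _ = d.factorial * (k + d).choose d := Nat.ascFactorial_eq_factorial_mul_choose _ _
    _ = d.factorial * ((Finset.univ : Finset κ).piAntidiag k).card := by
        rw [card_piAntidiag_nat, Finset.card_univ, hcard, ← Nat.choose_symm_add]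
        congr 2
        omega
    _ ≤ d.factorial * (latticeSlice Λ v h (s * k)).ncard := by gcongr

end CountingFunction

section Homogenization

lemma range_prodMk_const {ι α β : Type*} (u : ι → α) (b : β) :
    (Set.range fun i ↦ (u i, b)) = Set.range u ×ˢ {b} := by
  rw [Set.prod_singleton, ← Set.range_comp, Function.comp_def]

variable {ι E : Type*} [AddCommGroup E] [Module ℝ E]

lemma mem_hull_range_iff_mem_smul_convexHull [Finite ι] {v : ι → E} {h : E →ₗ[ℝ] ℝ} {s : ℝ}
    (hs : 0 < s) (hv : ∀ i, h (v i) = s) {x : E} (hx : 0 < h x) :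
    x ∈ PointedCone.hull ℝ (Set.range v) ↔ x ∈ (h x / s) • convexHull ℝ (Set.range v) := by
  have := Fintype.ofFinite ι
  have hr : 0 < h x / s := div_pos hx hs
  rw [Set.mem_smul_set_iff_inv_smul_mem₀ hr.ne']
  constructor
  · intro hmem
    obtain ⟨c, hc, rfl⟩ := mem_hull_range_iff.1 hmem
    have hsum : h (Fintype.linearCombination ℝ v c) / s = ∑ i, c i := by
      rw [height_linearCombination hv, mul_div_cancel_left₀ _ hs.ne']
    rw [hsum] at hr ⊢
    exact Finset.univ.centerMass_mem_convexHull (fun i _ ↦ hc i) hr fun i _ ↦ Set.mem_range_self i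
  · intro hmem
    have hsub : convexHull ℝ (Set.range v) ⊆ PointedCone.hull ℝ (Set.range v) :=
      convexHull_min PointedCone.subset_hull (PointedCone.convex _)
    rw [← smul_inv_smul₀ hr.ne' x]
    exact PointedCone.smul_mem _ hr.le (hsub hmem)

lemma prodMk_mem_hull_iff_mem_smul [Finite ι] {u : ι → E} {P : Set E} {s t : ℝ} (hs : 0 < s)
    (hP : s • P = convexHull ℝ (Set.range u)) (ht : 0 < t) {x : E} :
    (x, t) ∈ PointedCone.hull ℝ (Set.range fun i ↦ (u i, s)) ↔ x ∈ t • P := by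
  have hr : t / s ≠ 0 := (div_pos ht hs).ne'
  have htP : t • P = (t / s) • s • P := by rw [smul_smul, div_mul_cancel₀ _ hs.ne']
  rw [mem_hull_range_iff_mem_smul_convexHull (h := LinearMap.snd ℝ E ℝ) hs (fun _ ↦ rfl) ht,
    LinearMap.snd_apply, range_prodMk_const, convexHull_prod, convexHull_singleton, ← hP, htP,
    Set.mem_smul_set_iff_inv_smul_mem₀ hr, Set.mem_smul_set_iff_inv_smul_mem₀ hr, Prod.smul_mk,
    Set.mem_prod]
  simp [ht.ne']

lemma finrank_span_eq_finrank_vectorSpan_add_one [Module.Finite ℝ E] {S : Set E}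
    (hS : S.Nonempty) {h : E →ₗ[ℝ] ℝ} {s : ℝ} (hs : s ≠ 0) (hv : ∀ x ∈ S, h x = s) :
    finrank ℝ (Submodule.span ℝ S) = finrank ℝ (vectorSpan ℝ S) + 1 := by
  obtain ⟨x₀, hx₀⟩ := hS
  have hker : vectorSpan ℝ S ≤ LinearMap.ker h := by
    refine Submodule.span_le.2 ?_
    rintro _ ⟨x, hx, y, hy, rfl⟩
    simp [hv x hx, hv y hy]
  have hnotMem : x₀ ∉ vectorSpan ℝ S := fun hmem ↦ hs ((hv x₀ hx₀).symm.trans (hker hmem))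
  suffices hspan : Submodule.span ℝ S = vectorSpan ℝ S ⊔ Submodule.span ℝ {x₀} by
    rw [hspan, Submodule.finrank_sup_span_singleton hnotMem]
  refine le_antisymm (Submodule.span_le.2 fun x hx ↦ ?_) (sup_le (Submodule.span_le.2 ?_) ?_)
  · rw [← sub_add_cancel x x₀]
    exact Submodule.add_mem_sup (vsub_mem_vectorSpan ℝ hx hx₀) (Submodule.mem_span_singleton_self _)
  · rintro _ ⟨x, hx, y, hy, rfl⟩
    exact Submodule.sub_mem _ (Submodule.subset_span hx) (Submodule.subset_span hy)
  · exact (Submodule.span_singleton_le_iff_mem _ _).2 (Submodule.subset_span hx₀)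

lemma finrank_span_range_prodMk_const [Nonempty ι] [Module.Finite ℝ E] {s : ℝ} (hs : s ≠ 0)
    (u : ι → E) :
    finrank ℝ (Submodule.span ℝ (Set.range fun i ↦ (u i, s))) =
      finrank ℝ (vectorSpan ℝ (Set.range u)) + 1 := by
  rw [finrank_span_eq_finrank_vectorSpan_add_one (Set.range_nonempty _)
    (h := LinearMap.snd ℝ E ℝ) hs (by rintro _ ⟨i, rfl⟩; rfl), range_prodMk_const,
    vectorSpan_prod_eq (Set.range_nonempty u) (Set.singleton_nonempty s), vectorSpan_singleton,
    ← Submodule.map_inl,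
    ← (Submodule.equivMapOfInjective _ LinearMap.inl_injective (vectorSpan ℝ _)).finrank_eq]

lemma vectorSpan_convexHull (S : Set E) : vectorSpan ℝ (convexHull ℝ S) = vectorSpan ℝ S := by
  rw [← direction_affineSpan, affineSpan_convexHull, direction_affineSpan]

lemma vectorSpan_smul₀ {a : ℝ} (ha : a ≠ 0) (S : Set E) :
    vectorSpan ℝ (a • S) = vectorSpan ℝ S := by
  rw [← direction_affineSpan, ← AffineSubspace.smul_span, AffineSubspace.direction_smul ha,
    direction_affineSpan]

end Homogenization

section Polytope

/-- The lattice `ℤⁿ × ℤ` in `ℝⁿ × ℝ`, which receives the points `(x, t)` with `x` a lattice point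
of the `t`-th dilate of a polytope. It is encoded as the `ℤ`-span of the standard basis, which makes
its discreteness available. -/
noncomputable abbrev integerLattice (n : ℕ) : AddSubgroup ((Fin n → ℝ) × ℝ) :=
  (Submodule.span ℤ
    (Set.range ((Pi.basisFun ℝ (Fin n)).prod (Basis.singleton Unit ℝ)))).toAddSubgroup

lemma mem_integerLattice_iff {n : ℕ} {x : (Fin n → ℝ) × ℝ} :
    x ∈ integerLattice n ↔ (∀ i, ∃ m : ℤ, x.1 i = m) ∧ ∃ m : ℤ, x.2 = m := by
  rw [Submodule.mem_toAddSubgroup, Basis.mem_span_iff_repr_mem]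
  simp [eq_comm]

variable {ι : Type*} {n : ℕ} {P : Set (Fin n → ℝ)}

lemma latticeCount_smul_eq_ncard_latticeSlice [Finite ι] {u : ι → Fin n → ℝ} {s t : ℕ}
    (hs : 0 < s) (hP : (s : ℝ) • P = convexHull ℝ (Set.range u)) (ht : 0 < t) :
    latticeCount ((t : ℝ) • P) = (latticeSlice (integerLattice n) (fun i ↦ (u i, (s : ℝ)))
      (LinearMap.snd ℝ (Fin n → ℝ) ℝ) t).ncard := by
  rw [latticeCount, ← Set.ncard_image_of_injective _ (Prod.mk_left_injective (t : ℝ))]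
  congr 1
  ext ⟨x, r⟩
  constructor
  · rintro ⟨x, ⟨hxP, hx⟩, ⟨⟩⟩
    exact ⟨mem_integerLattice_iff.2 ⟨hx, t, by simp⟩,
      (prodMk_mem_hull_iff_mem_smul (by positivity) hP (by positivity)).2 hxP, rfl⟩
  · rintro ⟨hx, hcone, rfl⟩
    exact ⟨x, ⟨(prodMk_mem_hull_iff_mem_smul (by positivity) hP (by positivity)).1 hcone,
      (mem_integerLattice_iff.1 hx).1⟩, rfl⟩

lemma IsIntegralPolytope.exists_eq_convexHull_range {S : Set (Fin n → ℝ)}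
    (hS : IsIntegralPolytope S) :
    ∃ W : Finset (Fin n → ℤ), S = convexHull ℝ (Set.range fun (w : W) k ↦ (w.1 k : ℝ)) := by
  obtain ⟨W, rfl⟩ := hS
  refine ⟨W, ?_⟩
  rw [Set.image_eq_range]
  rfl

theorem stmt18_general {d s : ℕ} (hne : P.Nonempty)
    (hd : finrank ℝ (affineSpan ℝ P).direction = d) (hs : 0 < s)
    (hsint : IsIntegralPolytope ((s : ℝ) • P)) :
    ∃ p : ℕ → ℚ[X], (∀ j, (p j).degree ≤ d) ∧
      (∀ t : ℕ, 0 < t → (p (t % s)).eval (t : ℚ) = latticeCount ((t : ℝ) • P)) ∧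
      (p 0).degree = d := by
  obtain ⟨W, hW⟩ := hsint.exists_eq_convexHull_range
  set u : W → Fin n → ℝ := fun w k ↦ w.1 k
  set v : W → (Fin n → ℝ) × ℝ := fun w ↦ (u w, (s : ℝ))
  have hs₀ : (s : ℝ) ≠ 0 := Nat.cast_ne_zero.2 hs.ne'
  have : Nonempty W := by
    rw [← Set.range_nonempty_iff_nonempty (f := u), ← convexHull_nonempty_iff (𝕜 := ℝ), ← hW]
    exact hne.smul_set
  have hv (w) : LinearMap.snd ℝ (Fin n → ℝ) ℝ (v w) = s := rfl
  have hvΛ (w) : v w ∈ integerLattice n :=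
    mem_integerLattice_iff.2 ⟨fun k ↦ ⟨w.1 k, rfl⟩, s, rfl⟩
  have hdim : finrank ℝ (Submodule.span ℝ (Set.range v)) = d + 1 := by
    rw [finrank_span_range_prodMk_const hs₀, ← vectorSpan_convexHull, ← hW, vectorSpan_smul₀ hs₀,
      ← direction_affineSpan, hd]
  have hcount (t : ℕ) (ht : 0 < t) := latticeCount_smul_eq_ncard_latticeSlice hs hW ht
  choose p hdeg hp using (isQuasiPolynomial_ncard_latticeSlice hs
    (fun x hx ↦ (mem_integerLattice_iff.1 hx).2) hvΛ hv hdim.le).congr fun t ht ↦ (hcount t ht).symm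
  refine ⟨p, hdeg, fun t ht ↦ hp _ t ht rfl, ?_⟩
  refine degree_eq_of_pow_le (C := d.factorial) hs (by positivity) (hdeg 0) fun k hk ↦ ?_
  have hsk : 0 < s * k := Nat.mul_pos hs hk
  simp only [hp 0 _ hsk (Nat.mul_mod_right s k), hcount _ hsk]
  exact_mod_cast pow_le_factorial_mul_ncard_latticeSlice hs hvΛ hv hdim k

end Polytope

theorem stmt18 (n d : ℕ) (V : Finset (Fin n → ℚ)) (hV : V.Nonempty)
    (P : Set (Fin n → ℝ))
    (hP : P = convexHull ℝ ((fun (v : Fin n → ℚ) (i : Fin n) => (v i : ℝ)) '' V))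
    (hd : Module.finrank ℝ (affineSpan ℝ P).direction = d)
    (s : ℕ) (hs : 0 < s) (hsint : IsIntegralPolytope ((s : ℝ) • P))
    (hsmin : ∀ s' : ℕ, 0 < s' → s' < s → ¬ IsIntegralPolytope ((s' : ℝ) • P)) :
    ∃ p : ℕ → Polynomial ℚ,
      (∀ j < s, (p j).degree ≤ d) ∧
      (∀ t : ℕ, 0 < t → (p (t % s)).eval (t : ℚ) = latticeCount ((t : ℝ) • P)) ∧
      (∃ j < s, (p j).degree = d) := by
  have hne : P.Nonempty := by
    rw [hP, convexHull_nonempty_iff]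
    exact hV.to_set.image _
  obtain ⟨p, hdeg, hp, hp₀⟩ := stmt18_general hne hd hs hsint
  exact ⟨p, fun j _ ↦ hdeg j, hp, 0, hs, hp₀⟩
end
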